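/- arXiv:1002.1995 — 8 statements merged into one kernel-verified Lean document; each statement's English description precedes it below -/
import Mathlib

section
/- Let α > 0 and λ ∈ ℝ. Suppose u : ℝ × ℝ → ℝ and t ∈ ℝ are such that: (i) x ↦ u(x,t) is continuous, bounded, and twice differentiable on ℝ; (ii) for every x ∈ ℝ the partial derivative ∂ₜu(x,t) := d/ds u(x,s)|_{s=t} exists; (iii) for every x ∈ ℝ the equation ∂ₜu(x,t) - λ u(x,t) + λ α² ∫_ℝ u(y,t) · e^{-α|x-y|}/(2α) dy = 0 holds. Then x ↦ ∂ₜu(x,t) is twice differentiable on ℝ and for every x ∈ ℝ, ∂²/∂x² (∂ₜu)(x,t) - α² ∂ₜu(x,t) - λ ∂²/∂x² u(x,t) = 0. -/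
open MeasureTheory

/-! The operator `d²/dx² - α²` factors as `(d/dx - α) (d/dx + α)`. Splitting the Green potential at
`x` writes it as a multiple of `P + Q`, where `P` collects the past of `f` with weight
`e^{-α(x-y)}` and `Q` its future with weight `e^{-α(y-x)}`. The fundamental theorem of calculus
gives `P' = f - αP` and, by reflection, `Q' = αQ - f`; hence the potential is twice differentiable
and `d²/dx² - α²` maps it to `-f`. -/

open Set

section GreenPotential

variable {E : Type*} [NormedAddCommGroup E] [NormedSpace ℝ E] {α : ℝ} {f : ℝ → E}

theorem hasDerivAt_integral_Iic [CompleteSpace E] (hf : Continuous f) {x : ℝ}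
    (hint : IntegrableOn f (Iic x)) : HasDerivAt (fun z ↦ ∫ y in Iic z, f y) (f x) x := by
  have hint' (z : ℝ) : IntegrableOn f (Iic z) :=
    integrableOn_Iic_iff_integrableAtFilter_atBot.2
      ⟨(integrableOn_Iic_iff_integrableAtFilter_atBot.1 hint).1,
        hf.locallyIntegrable.locallyIntegrableOn _⟩
  have hsplit (z : ℝ) : ∫ y in Iic z, f y = (∫ y in Iic x, f y) + ∫ y in x..z, f y :=
    eq_add_of_sub_eq' (intervalIntegral.integral_Iic_sub_Iic hint (hint' z))
  rw [funext hsplit]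
  exact (hf.integral_hasStrictDerivAt x x).hasDerivAt.const_add _

/-- The Green's function of `d²/dx² - α²` in the convention `(d²/dx² - α²) g = -δ`, that is, the
symmetric Laplace density divided by `α²`. For `α = 0` it is `0`, by division by zero. -/
noncomputable def laplaceGreen (α x : ℝ) : ℝ :=
  Real.exp (-α * |x|) / (2 * α)

/-- The convolution of `f` with `laplaceGreen α`. -/
noncomputable def greenPotential (α : ℝ) (f : ℝ → E) (x : ℝ) : E :=
  ∫ y, laplaceGreen α (x - y) • f y

/-- The past of `f` up to `x`, discounted at rate `α`. The discounted future of `f` is the past of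
its reflection `fun y ↦ f (-y)` up to `-x`. -/
noncomputable def discountedPast (α : ℝ) (f : ℝ → E) (x : ℝ) : E :=
  ∫ y in Iic x, Real.exp (-α * (x - y)) • f y

theorem discountedPast_eq_exp_smul_integral (x : ℝ) :
    discountedPast α f x = Real.exp (-α * x) • ∫ y in Iic x, Real.exp (α * y) • f y := by
  rw [discountedPast, ← integral_smul]
  congr! 2 with y
  rw [smul_smul, ← Real.exp_add]
  congr 2
  ring

theorem hasDerivAt_discountedPast [CompleteSpace E] (hf : Continuous f) {x : ℝ}
    (hint : IntegrableOn (fun y ↦ Real.exp (α * y) • f y) (Iic x)) :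
    HasDerivAt (discountedPast α f) (f x - α • discountedPast α f x) x := by
  have hexp : HasDerivAt (fun z ↦ Real.exp (-α * z)) (Real.exp (-α * x) * -α) x := by
    simpa using ((hasDerivAt_id x).const_mul (-α)).exp
  have htail : HasDerivAt (fun z ↦ ∫ y in Iic z, Real.exp (α * y) • f y)
      (Real.exp (α * x) • f x) x := hasDerivAt_integral_Iic (by fun_prop) hint
  have hcancel : Real.exp (-α * x) * Real.exp (α * x) = 1 := by
    rw [← Real.exp_add]
    simp
  rw [funext (discountedPast_eq_exp_smul_integral (α := α) (f := f))]
  refine (hexp.smul htail).congr_deriv ?_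
  rw [smul_smul, hcancel]
  module

theorem integral_Ioi_exp_smul_eq_discountedPast (x : ℝ) :
    ∫ y in Ioi x, Real.exp (-α * (y - x)) • f y = discountedPast α (fun y ↦ f (-y)) (-x) := by
  rw [discountedPast, ← integral_comp_neg_Ioi]
  congr! 4 with y
  · ring
  · rw [neg_neg]

theorem integrable_exp_neg_mul_abs_sub_smul
    (hint : Integrable fun y ↦ Real.exp (-α * |y|) • f y) (x : ℝ) :
    Integrable fun y ↦ Real.exp (-α * |x - y|) • f y := by
  have hbound (y : ℝ) : ‖Real.exp (α * (|y| - |x - y|))‖ ≤ Real.exp (|α| * |x|) := by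
    rw [Real.norm_eq_abs, Real.abs_exp, Real.exp_le_exp]
    have habs : |(|y| - |x - y|)| ≤ |x| := by
      simpa [abs_sub_comm x y] using abs_abs_sub_abs_le_abs_sub y (y - x)
    calc α * (|y| - |x - y|) ≤ |α| * |(|y| - |x - y|)| := by
          rw [← abs_mul]
          exact le_abs_self _
      _ ≤ |α| * |x| := by gcongr
  refine (hint.bdd_smul (φ := fun y ↦ Real.exp (α * (|y| - |x - y|))) _
    (by fun_prop) (.of_forall hbound)).congr (.of_forall fun y ↦ ?_)
  simp only [Pi.smul_apply', smul_smul, ← Real.exp_add]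
  congr 2
  ring

theorem integrableOn_exp_mul_smul_Iic
    (hint : Integrable fun y ↦ Real.exp (-α * |y|) • f y) (x : ℝ) :
    IntegrableOn (fun y ↦ Real.exp (α * y) • f y) (Iic x) := by
  have hscaled := (integrable_exp_neg_mul_abs_sub_smul hint x).integrableOn (s := Iic x)
    |>.smul (Real.exp (α * x))
  refine IntegrableOn.congr_fun hscaled (fun y (hy : y ≤ x) ↦ ?_) measurableSet_Iic
  simp only [Pi.smul_apply, smul_smul, ← Real.exp_add, abs_of_nonneg (sub_nonneg.2 hy)]
  congr 2
  ring

theorem greenPotential_eq_discountedPast_add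
    (hint : Integrable fun y ↦ Real.exp (-α * |y|) • f y) (x : ℝ) :
    greenPotential α f x =
      (2 * α)⁻¹ • (discountedPast α f x + discountedPast α (fun y ↦ f (-y)) (-x)) := by
  have hpast : ∫ y in Iic x, Real.exp (-α * |x - y|) • f y = discountedPast α f x :=
    setIntegral_congr_fun measurableSet_Iic fun y (hy : y ≤ x) ↦ by
      simp only [abs_of_nonneg (sub_nonneg.2 hy)]
  have hfuture : ∫ y in Ioi x, Real.exp (-α * |x - y|) • f y =
      discountedPast α (fun y ↦ f (-y)) (-x) := by
    rw [← integral_Ioi_exp_smul_eq_discountedPast]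
    refine setIntegral_congr_fun measurableSet_Ioi fun y (hy : x < y) ↦ ?_
    simp only [abs_sub_comm x y, abs_of_pos (sub_pos.2 hy)]
  have hintx := integrable_exp_neg_mul_abs_sub_smul hint x
  rw [← hpast, ← hfuture,
    intervalIntegral.integral_Iic_add_Ioi hintx.integrableOn hintx.integrableOn, ← integral_smul]
  simp only [greenPotential, laplaceGreen, smul_smul, div_eq_inv_mul]

theorem integrable_exp_neg_mul_abs (hα : 0 < α) : Integrable fun y ↦ Real.exp (-α * |y|) := by
  have hIic : IntegrableOn (fun y ↦ Real.exp (-α * |y|)) (Iic 0) :=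
    (integrableOn_exp_mul_Iic hα 0).congr_fun (fun y (hy : y ≤ 0) ↦ by simp [abs_of_nonpos hy])
      measurableSet_Iic
  have hIoi : IntegrableOn (fun y ↦ Real.exp (-α * |y|)) (Ioi 0) :=
    (exp_neg_integrableOn_Ioi 0 hα).congr_fun (fun y (hy : 0 < y) ↦ by simp [abs_of_pos hy])
      measurableSet_Ioi
  rw [← integrableOn_univ, ← Iic_union_Ioi (a := (0 : ℝ))]
  exact hIic.union hIoi

theorem integrable_exp_neg_mul_abs_smul_of_bounded (hα : 0 < α) (hf : AEStronglyMeasurable f)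
    {M : ℝ} (hM : ∀ x, ‖f x‖ ≤ M) : Integrable fun y ↦ Real.exp (-α * |y|) • f y :=
  (integrable_exp_neg_mul_abs hα).smul_bdd M hf (.of_forall hM)

variable [CompleteSpace E]

theorem hasDerivAt_discountedPast_reflect (hf : Continuous f)
    (hint : Integrable fun y ↦ Real.exp (-α * |y|) • f y) (x : ℝ) :
    HasDerivAt (fun z ↦ discountedPast α (fun y ↦ f (-y)) (-z))
      (α • discountedPast α (fun y ↦ f (-y)) (-x) - f x) x := by
  have hint_neg : Integrable fun y ↦ Real.exp (-α * |y|) • f (-y) := by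
    simpa only [abs_neg] using hint.comp_neg
  have hpast := hasDerivAt_discountedPast (f := fun y ↦ f (-y)) (by fun_prop)
    (integrableOn_exp_mul_smul_Iic hint_neg (-x))
  refine (hpast.scomp x (hasDerivAt_neg x)).congr_deriv ?_
  rw [neg_neg]
  module

theorem hasDerivAt_greenPotential (hα : α ≠ 0) (hf : Continuous f)
    (hint : Integrable fun y ↦ Real.exp (-α * |y|) • f y) (x : ℝ) :
    HasDerivAt (greenPotential α f)
      ((2 : ℝ)⁻¹ • (discountedPast α (fun y ↦ f (-y)) (-x) - discountedPast α f x)) x := by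
  have hpast := hasDerivAt_discountedPast hf (integrableOn_exp_mul_smul_Iic hint x)
  have hfuture := hasDerivAt_discountedPast_reflect hf hint x
  rw [funext (greenPotential_eq_discountedPast_add hint)]
  refine ((hpast.add hfuture).const_smul (2 * α)⁻¹).congr_deriv ?_
  match_scalars <;> field_simp
  ring

theorem hasDerivAt_deriv_greenPotential (hα : α ≠ 0) (hf : Continuous f)
    (hint : Integrable fun y ↦ Real.exp (-α * |y|) • f y) (x : ℝ) :
    HasDerivAt (deriv (greenPotential α f)) (α ^ 2 • greenPotential α f x - f x) x := by
  have hpast := hasDerivAt_discountedPast hf (integrableOn_exp_mul_smul_Iic hint x)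
  have hfuture := hasDerivAt_discountedPast_reflect hf hint x
  rw [funext fun z ↦ (hasDerivAt_greenPotential hα hf hint z).deriv,
    greenPotential_eq_discountedPast_add hint]
  refine ((hfuture.sub hpast).const_smul (2 : ℝ)⁻¹).congr_deriv ?_
  match_scalars <;> field_simp
  ring

theorem stmt_3_general (hα : α ≠ 0) (lam : ℝ) {w v : ℝ → E}
    (hint : Integrable fun y ↦ Real.exp (-α * |y|) • w y)
    (hw : Differentiable ℝ w) (hw' : Differentiable ℝ (deriv w))
    (heq : ∀ x, v x - lam • w x +
      (lam * α ^ 2) • ∫ y, (Real.exp (-α * |x - y|) / (2 * α)) • w y = 0) :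
    Differentiable ℝ v ∧ Differentiable ℝ (deriv v) ∧
      ∀ x, deriv (deriv v) x - α ^ 2 • v x - lam • deriv (deriv w) x = 0 := by
  have hv (x : ℝ) : v x = lam • w x - (lam * α ^ 2) • greenPotential α w x := by
    rw [← sub_eq_zero, sub_sub_eq_add_sub, add_sub_right_comm]
    exact heq x
  have hderiv (x : ℝ) : HasDerivAt v
      (lam • deriv w x - (lam * α ^ 2) • deriv (greenPotential α w) x) x := by
    have hG := (hasDerivAt_greenPotential hα hw.continuous hint x).differentiableAt.hasDerivAt
    rw [funext hv]
    exact ((hw x).hasDerivAt.const_smul lam).sub (hG.const_smul (lam * α ^ 2))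
  have hderiv2 (x : ℝ) : HasDerivAt (deriv v) (lam • deriv (deriv w) x -
      (lam * α ^ 2) • (α ^ 2 • greenPotential α w x - w x)) x := by
    rw [funext fun z ↦ (hderiv z).deriv]
    exact ((hw' x).hasDerivAt.const_smul lam).sub
      ((hasDerivAt_deriv_greenPotential hα hw.continuous hint x).const_smul (lam * α ^ 2))
  refine ⟨fun x ↦ (hderiv x).differentiableAt, fun x ↦ (hderiv2 x).differentiableAt, fun x ↦ ?_⟩
  rw [(hderiv2 x).deriv, hv x]
  module

end GreenPotential

theorem stmt_3 (α lam : ℝ) (hα : 0 < α) (u : ℝ → ℝ → ℝ) (t : ℝ)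
    (hcont : Continuous (fun x => u x t))
    (hbdd : ∃ M : ℝ, ∀ x : ℝ, |u x t| ≤ M)
    (hdiff1 : ∀ x : ℝ, DifferentiableAt ℝ (fun x => u x t) x)
    (hdiff2 : ∀ x : ℝ, DifferentiableAt ℝ (deriv (fun x => u x t)) x)
    (ht : ∀ x : ℝ, DifferentiableAt ℝ (fun s => u x s) t)
    (heq : ∀ x : ℝ,
      deriv (fun s => u x s) t - lam * u x t +
        lam * α ^ 2 * ∫ y : ℝ, u y t * (Real.exp (-α * |x - y|) / (2 * α)) = 0) :
    (∀ x : ℝ, DifferentiableAt ℝ (fun x => deriv (fun s => u x s) t) x) ∧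
    (∀ x : ℝ, DifferentiableAt ℝ (deriv (fun x => deriv (fun s => u x s) t)) x) ∧
    (∀ x : ℝ,
      deriv (deriv (fun x => deriv (fun s => u x s) t)) x -
        α ^ 2 * deriv (fun s => u x s) t -
        lam * deriv (deriv (fun x => u x t)) x = 0) := by
  obtain ⟨M, hM⟩ := hbdd
  exact stmt_3_general hα.ne' lam
    (integrable_exp_neg_mul_abs_smul_of_bounded hα hcont.aestronglyMeasurable hM) hdiff1 hdiff2
    (by simpa only [smul_eq_mul, mul_comm (u _ t)] using heq)
end

section
/- Let α < 2 with α ≠ 0 and α ≠ 1, let ν > 1, and let t be a real number with t < ν. Then ∫_0^∞ (e^{t y} - 1 - (e^{y} - 1) t) · e^{-ν y} y^{-(1+α)} dy = Γ(-α) · ((ν - t)^α - ν^α + (ν^α - (ν - 1)^α) t), where Γ is the real Gamma function. -/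
open MeasureTheory

/-!
Write the compensated integrand as `y ^ (-α - 1) * F y`, where `F` is the sum of three exponentials
with rates `ν - t`, `ν`, `ν - 1` and coefficients `1`, `t - 1`, `-t`. Term by term, Euler's integral
gives the Mellin transform `Γ(s) ∑ cᵢ aᵢ ^ (-s)` of `∑ cᵢ exp (-aᵢ y)` for `0 < Re s`. The moments
`∑ cᵢ` and `∑ cᵢ aᵢ` vanish, so `F` is `O(y ^ 2)` at `0`, and integrating by parts twice, each time
with `Γ(s + 1) = s Γ(s)`, extends the formula to `-2 < Re s`. For complex rates, Euler's integral
comes from differentiating in the rate `a`: the same integration by parts shows that `a ^ s` times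
the integral does not depend on `a`.
-/

open Asymptotics Complex Filter Set
open scoped Topology

section Mellin

variable {E : Type*} [NormedAddCommGroup E] [NormedSpace ℂ E] {f f' : ℝ → E} {s : ℂ} {m : E}

lemma tendsto_cpow_smul_of_isBigO {l : Filter ℝ} {b : ℝ} (hl : ∀ᶠ y in l, 0 < y)
    (hf : f =O[l] (· ^ b)) (hlim : Tendsto (fun y : ℝ => y ^ (s.re + b)) l (𝓝 0)) :
    Tendsto (fun y : ℝ => (y : ℂ) ^ s • f y) l (𝓝 0) := by
  have hcpow : (fun y : ℝ => (y : ℂ) ^ s) =O[l] (· ^ s.re) :=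
    .of_norm_eventuallyLE <| hl.mono fun y hy => (norm_cpow_eq_rpow_re_of_pos hy s).le
  refine ((hcpow.smul hf).congr' .rfl ?_).trans_tendsto hlim
  filter_upwards [hl] with y hy
  rw [smul_eq_mul, ← Real.rpow_add hy]

lemma tendsto_cpow_smul_nhdsGT_zero {b : ℝ} (hf : f =O[𝓝[>] 0] (· ^ (-b))) (hb : b < s.re) :
    Tendsto (fun y : ℝ => (y : ℂ) ^ s • f y) (𝓝[>] 0) (𝓝 0) := by
  have hpos : 0 < s.re + -b := by linarith
  refine tendsto_cpow_smul_of_isBigO self_mem_nhdsWithin hf ?_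
  have hcont := (Real.continuousAt_rpow_const 0 _ (.inr hpos.le)).tendsto
  rw [Real.zero_rpow hpos.ne'] at hcont
  exact hcont.mono_left nhdsWithin_le_nhds

lemma tendsto_cpow_smul_atTop {b : ℝ} (hf : f =O[atTop] (· ^ (-b))) (hb : s.re < b) :
    Tendsto (fun y : ℝ => (y : ℂ) ^ s • f y) atTop (𝓝 0) := by
  refine tendsto_cpow_smul_of_isBigO (eventually_gt_atTop 0) hf ?_
  simpa [neg_sub, sub_eq_add_neg] using tendsto_rpow_neg_atTop (sub_pos.mpr hb)

theorem hasMellin_of_hasDerivAt [CompleteSpace E] {a b : ℝ} (hs : s ≠ 0)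
    (hderiv : ∀ y > 0, HasDerivAt f (f' y) y)
    (htop : f =O[atTop] (· ^ (-a))) (ha : s.re < a)
    (hbot : f =O[𝓝[>] 0] (· ^ (-b))) (hb : b < s.re)
    (hf' : HasMellin f' (s + 1) m) : HasMellin f s (-s⁻¹ • m) := by
  have hconv : MellinConvergent f s := by
    have hcont : ContinuousOn f (Ioi 0) := fun y hy => (hderiv y hy).continuousAt.continuousWithinAt
    exact mellinConvergent_of_isBigO_rpow (hcont.locallyIntegrableOn measurableSet_Ioi)
      htop ha hbot hb
  refine ⟨hconv, ?_⟩
  have hprod : ∀ y ∈ Ioi (0 : ℝ), HasDerivAt (fun y : ℝ => (y : ℂ) ^ s • f y)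
      ((y : ℂ) ^ (s + 1 - 1) • f' y + s • (y : ℂ) ^ (s - 1) • f y) y := fun y hy => by
    simpa only [add_sub_cancel_right, smul_smul] using!
      (hasDerivAt_ofReal_cpow_const (ne_of_gt hy) hs).smul (hderiv y hy)
  have hcont : ContinuousWithinAt (fun y : ℝ => (y : ℂ) ^ s • f y) (Ici 0) 0 := by
    rw [← continuousWithinAt_Ioi_iff_Ici, ContinuousWithinAt, ofReal_zero, zero_cpow hs, zero_smul]
    exact tendsto_cpow_smul_nhdsGT_zero hbot hb
  have hparts : mellin f' (s + 1) + s • mellin f s = 0 := by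
    calc mellin f' (s + 1) + s • mellin f s
        = ∫ y in Ioi (0 : ℝ), ((y : ℂ) ^ (s + 1 - 1) • f' y + s • (y : ℂ) ^ (s - 1) • f y) := by
          rw [mellin, mellin, ← integral_smul]
          exact (integral_add hf'.1 (hconv.smul s)).symm
      _ = 0 - ((0 : ℝ) : ℂ) ^ s • f 0 :=
          integral_Ioi_of_hasDerivAt_of_tendsto hcont hprod (hf'.1.add (hconv.smul s))
            (tendsto_cpow_smul_atTop htop ha)
      _ = 0 := by simp [zero_cpow hs]
  rw [← hf'.2, eq_neg_of_add_eq_zero_left hparts, smul_neg, neg_smul, neg_neg, inv_smul_smul₀ hs]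

lemma hasMellin_sum {ι : Type*} {S : Finset ι} {f : ι → ℝ → E} {m : ι → E}
    (h : ∀ i ∈ S, HasMellin (f i) s (m i)) :
    HasMellin (fun y => ∑ i ∈ S, f i y) s (∑ i ∈ S, m i) := by
  simp only [HasMellin, MellinConvergent, mellin, Finset.smul_sum]
  exact ⟨integrable_finsetSum _ fun i hi => (h i hi).1,
    (integral_finsetSum _ fun i hi => (h i hi).1).trans
      (Finset.sum_congr rfl fun i hi => (h i hi).2)⟩

lemma hasMellin_smul_const [CompleteSpace E] {g : ℝ → ℂ} {z : ℂ} (h : HasMellin g s z) (c : E) :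
    HasMellin (fun y => g y • c) s (z • c) := by
  simp only [HasMellin, MellinConvergent, mellin, ← smul_assoc]
  exact ⟨h.1.smul_const c, (integral_smul_const _ c).trans (congrArg (· • c) h.2)⟩

end Mellin

section EulerIntegral

variable {a s : ℂ}

lemma hasDerivAt_cexp_neg_mul (a : ℂ) (y : ℝ) :
    HasDerivAt (fun y : ℝ => cexp (-a * y)) (-a * cexp (-a * y)) y := by
  simpa [mul_comm] using (((hasDerivAt_id (y : ℂ)).const_mul (-a)).cexp).comp_ofReal

lemma isBigO_cexp_neg_mul_atTop (ha : 0 < a.re) (b : ℝ) :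
    (fun y : ℝ => cexp (-a * y)) =O[atTop] (· ^ b) := by
  refine .trans (.of_norm_eventuallyLE (.of_forall fun y => ?_))
    (isLittleO_exp_neg_mul_rpow_atTop ha b).isBigO
  simp [norm_exp]

lemma isBigO_cexp_neg_mul_nhdsGT_zero (a : ℂ) :
    (fun y : ℝ => cexp (-a * y)) =O[𝓝[>] 0] (· ^ (-0 : ℝ)) := by
  have hcont : Continuous fun y : ℝ => cexp (-a * y) := by fun_prop
  simpa only [neg_zero, Real.rpow_zero] using
    ((hcont.tendsto 0).mono_left nhdsWithin_le_nhds).isBigO_one ℝ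

lemma mellinConvergent_cexp_neg_mul (ha : 0 < a.re) (hs : 0 < s.re) :
    MellinConvergent (fun y => cexp (-a * y)) s :=
  mellinConvergent_of_isBigO_rpow
    ((by fun_prop : Continuous fun y : ℝ => cexp (-a * y)).locallyIntegrable.locallyIntegrableOn _)
    (isBigO_cexp_neg_mul_atTop ha _) (lt_add_one _) (isBigO_cexp_neg_mul_nhdsGT_zero a) hs

lemma mellin_cexp_neg_mul_add_one (ha : 0 < a.re) (hs : 0 < s.re) :
    mellin (fun y => cexp (-a * y)) (s + 1) = s / a * mellin (fun y => cexp (-a * y)) s := by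
  have ha0 : a ≠ 0 := by rintro rfl; simp at ha
  have hs0 : s ≠ 0 := by rintro rfl; simp at hs
  have hconv : MellinConvergent (fun y => cexp (-a * y)) (s + 1) :=
    mellinConvergent_cexp_neg_mul ha (by simpa using hs.trans (lt_add_one _))
  have hparts := (hasMellin_of_hasDerivAt hs0 (fun y _ => hasDerivAt_cexp_neg_mul a y)
    (isBigO_cexp_neg_mul_atTop ha _) (lt_add_one _) (isBigO_cexp_neg_mul_nhdsGT_zero a) hs
    (hasMellin_const_smul hconv (-a))).2
  rw [hparts, smul_eq_mul, smul_eq_mul]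
  field_simp

lemma hasDerivAt_mellin_cexp_neg_mul (ha : 0 < a.re) (hs : 0 < s.re) :
    HasDerivAt (fun a => mellin (fun y => cexp (-a * y)) s)
      (-mellin (fun y => cexp (-a * y)) (s + 1)) a := by
  have hs1 : 0 < (s + 1).re := by simpa using hs.trans (lt_add_one _)
  have hhalf : 0 < (a / 2).re := by simpa using ha
  have hnhds : {z : ℂ | (a / 2).re < z.re} ∈ 𝓝 a :=
    (isOpen_lt continuous_const continuous_re).mem_nhds (by simpa using ha)
  rw [mellin, ← integral_neg]
  refine (hasDerivAt_integral_of_dominated_loc_of_deriv_le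
    (F := fun z (y : ℝ) => (y : ℂ) ^ (s - 1) • cexp (-z * y))
    (F' := fun z (y : ℝ) => -((y : ℂ) ^ (s + 1 - 1) • cexp (-z * y)))
    (bound := fun y : ℝ => ‖(y : ℂ) ^ (s + 1 - 1) • cexp (-(a / 2) * y)‖) hnhds ?_
    (mellinConvergent_cexp_neg_mul ha hs)
    (mellinConvergent_cexp_neg_mul ha hs1).neg.aestronglyMeasurable ?_
    (mellinConvergent_cexp_neg_mul hhalf hs1).norm ?_).2
  · filter_upwards [hnhds] with z hz
    exact (mellinConvergent_cexp_neg_mul (hhalf.trans hz) hs).aestronglyMeasurable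
  · filter_upwards [ae_restrict_mem measurableSet_Ioi] with y hy z hz
    rw [norm_neg, norm_smul, norm_smul, norm_exp, norm_exp]
    refine mul_le_mul_of_nonneg_left (Real.exp_le_exp.mpr ?_) (norm_nonneg _)
    simpa only [neg_mul, neg_re, re_mul_ofReal, neg_le_neg_iff] using
      mul_le_mul_of_nonneg_right (le_of_lt hz) (le_of_lt hy)
  · filter_upwards [ae_restrict_mem measurableSet_Ioi] with y hy z _
    have hcpow : (y : ℂ) ^ (s + 1 - 1) = (y : ℂ) ^ (s - 1) * y := by
      rw [← sub_add_eq_add_sub, cpow_add _ _ (ofReal_ne_zero.mpr (ne_of_gt hy)), cpow_one]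
    have hexp : HasDerivAt (fun z : ℂ => cexp (-z * y)) (cexp (-z * y) * -y) z := by
      simpa using ((hasDerivAt_neg z).mul_const (y : ℂ)).cexp
    convert! hexp.const_mul ((y : ℂ) ^ (s - 1)) using 1
    rw [hcpow, smul_eq_mul]
    ring

lemma cpow_mul_mellin_cexp_neg_mul_eq (ha : 0 < a.re) (hs : 0 < s.re) :
    a ^ s * mellin (fun y => cexp (-a * y)) s = Gamma s := by
  have hderiv {z : ℂ} (hz : 0 < z.re) :
      HasDerivAt (fun z => z ^ s * mellin (fun y => cexp (-z * y)) s) 0 z := by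
    have hz0 : z ≠ 0 := by rintro rfl; simp at hz
    convert! ((hasDerivAt_id z).cpow_const (.inl hz)).mul
      (hasDerivAt_mellin_cexp_neg_mul hz hs) using 1
    rw [id, cpow_sub _ _ hz0, cpow_one]
    rw [mellin_cexp_neg_mul_add_one hz hs]
    ring
  have hconst := (isOpen_lt continuous_const continuous_re).is_const_of_deriv_eq_zero
    (convex_halfSpace_re_gt 0).isPreconnected
    (fun z hz => (hderiv hz).differentiableAt.differentiableWithinAt)
    (fun z hz => (hderiv hz).deriv) ha (show (0 : ℝ) < (1 : ℂ).re by simp)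
  rw [hconst, one_cpow, one_mul, Gamma_eq_integral hs, GammaIntegral_eq_mellin]
  simp [mellin]

theorem hasMellin_cexp_neg_mul (ha : 0 < a.re) (hs : 0 < s.re) :
    HasMellin (fun y => cexp (-a * y)) s (Gamma s * a ^ (-s)) := by
  have hpow : a ^ s ≠ 0 := cpow_ne_zero_iff.mpr (.inl (by rintro rfl; simp at ha))
  refine ⟨mellinConvergent_cexp_neg_mul ha hs, ?_⟩
  rw [← cpow_mul_mellin_cexp_neg_mul_eq ha hs, cpow_neg, mul_comm (a ^ s),
    mul_inv_cancel_right₀ hpow]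

end EulerIntegral

section ExpSum

variable {ι E : Type*} [NormedAddCommGroup E] [NormedSpace ℂ E]
  {S : Finset ι} {a : ι → ℂ} {c : ι → E} {s : ℂ}

/-- The exponential sum `y ↦ ∑ i ∈ S, exp (-a i * y) • c i`, the Laplace transform of the finitely
supported measure with mass `c i` at `a i`. With this sign, rates of positive real part mean decay
at infinity. -/
noncomputable def expSum (S : Finset ι) (a : ι → ℂ) (c : ι → E) (y : ℝ) : E :=
  ∑ i ∈ S, cexp (-a i * y) • c i

lemma hasDerivAt_expSum (S : Finset ι) (a : ι → ℂ) (c : ι → E) (y : ℝ) :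
    HasDerivAt (expSum S a c) (expSum S a (fun i => -a i • c i) y) y := by
  refine (HasDerivAt.fun_sum fun i _ =>
    (hasDerivAt_cexp_neg_mul (a i) y).smul_const (c i)).congr_deriv ?_
  exact Finset.sum_congr rfl fun i _ => by rw [smul_smul, mul_comm]

lemma isBigO_expSum_atTop (ha : ∀ i ∈ S, 0 < (a i).re) (b : ℝ) :
    expSum S a c =O[atTop] (· ^ b) := by
  refine IsBigO.fun_sum fun i hi => ?_
  simpa using (isBigO_cexp_neg_mul_atTop (ha i hi) b).smul
    (isBigO_const_const (c i) (one_ne_zero' ℝ) atTop)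

lemma expSum_eq_sum_taylor_remainder {n : ℕ} (hc : ∀ k < n, ∑ i ∈ S, a i ^ k • c i = 0) (y : ℝ) :
    expSum S a c y =
      ∑ i ∈ S, (cexp (-a i * y) - ∑ k ∈ Finset.range n, (-a i * y) ^ k / k.factorial) • c i := by
  have hpoly : ∑ i ∈ S, (∑ k ∈ Finset.range n, (-a i * y) ^ k / k.factorial) • c i = 0 := by
    simp only [Finset.sum_smul]
    rw [Finset.sum_comm]
    refine Finset.sum_eq_zero fun k hk => ?_
    calc ∑ i ∈ S, ((-a i * y) ^ k / k.factorial) • c i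
        = ((-y : ℂ) ^ k / k.factorial) • ∑ i ∈ S, a i ^ k • c i := by
          rw [Finset.smul_sum]
          refine Finset.sum_congr rfl fun i _ => ?_
          rw [smul_smul, show -a i * (y : ℂ) = -y * a i by ring, mul_pow]
          ring_nf
      _ = 0 := by rw [hc k (Finset.mem_range.mp hk), smul_zero]
  simp only [sub_smul, Finset.sum_sub_distrib, hpoly, sub_zero, expSum]

lemma isBigO_expSum_nhds_zero {n : ℕ} (hc : ∀ k < n, ∑ i ∈ S, a i ^ k • c i = 0) :
    expSum S a c =O[𝓝 0] (· ^ n) := by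
  rw [funext (expSum_eq_sum_taylor_remainder hc)]
  refine IsBigO.fun_sum fun i _ => ?_
  have hlim : Tendsto (fun y : ℝ => -a i * (y : ℂ)) (𝓝 0) (𝓝 0) :=
    (by fun_prop : Continuous fun y : ℝ => -a i * (y : ℂ)).tendsto' 0 0 (by simp)
  have hpow : (fun y : ℝ => (-a i * (y : ℂ)) ^ n) =O[𝓝 0] (· ^ n) := by
    refine IsBigO.pow (.of_bound ‖a i‖ (.of_forall fun y => ?_)) n
    simp
  simpa using (((exp_sub_sum_range_isBigO_pow n).comp_tendsto hlim).trans hpow).smul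
    (isBigO_const_const (c i) (one_ne_zero' ℝ) (𝓝 0))

theorem hasMellin_expSum [CompleteSpace E] {n : ℕ} (ha : ∀ i ∈ S, 0 < (a i).re)
    (hc : ∀ k < n, ∑ i ∈ S, a i ^ k • c i = 0) (hs : -n < s.re) (hpole : ∀ k : ℕ, s ≠ -k) :
    HasMellin (expSum S a c) s (Gamma s • ∑ i ∈ S, a i ^ (-s) • c i) := by
  induction n generalizing c s with
  | zero =>
    rw [Nat.cast_zero, neg_zero] at hs
    simp only [Finset.smul_sum, smul_smul]
    exact hasMellin_sum fun i hi => hasMellin_smul_const (hasMellin_cexp_neg_mul (ha i hi) hs) (c i)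
  | succ n ih =>
    have hs0 : s ≠ 0 := by simpa using hpole 0
    have hderiv : HasMellin (expSum S a fun i => -a i • c i) (s + 1)
        (Gamma (s + 1) • ∑ i ∈ S, a i ^ (-(s + 1)) • -a i • c i) := by
      refine ih (fun k hk => ?_) ?_ fun k hk => hpole (k + 1) ?_
      · simpa [smul_smul, pow_succ] using hc (k + 1) (by lia)
      · push_cast at hs
        simp only [add_re, one_re]
        linarith
      · push_cast
        linear_combination hk
    have hsum : ∑ i ∈ S, a i ^ (-(s + 1)) • -a i • c i = -∑ i ∈ S, a i ^ (-s) • c i := by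
      rw [← Finset.sum_neg_distrib]
      refine Finset.sum_congr rfl fun i hi => ?_
      have hai : a i ≠ 0 := fun h => by simpa [h] using ha i hi
      rw [neg_smul, smul_neg, smul_smul, neg_add, ← sub_eq_add_neg, cpow_sub _ _ hai, cpow_one,
        div_mul_cancel₀ _ hai]
    have hzero : expSum S a c =O[𝓝[>] 0] fun y : ℝ => y ^ (-(-(n + 1 : ℕ) : ℝ)) := by
      simpa only [neg_neg, Real.rpow_natCast] using
        (isBigO_expSum_nhds_zero hc).mono nhdsWithin_le_nhds
    have hparts := hasMellin_of_hasDerivAt hs0 (fun y _ => hasDerivAt_expSum S a c y)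
      (isBigO_expSum_atTop ha _) (lt_add_one _) hzero hs hderiv
    rwa [hsum, Gamma_add_one s hs0, smul_neg, smul_neg, neg_smul, neg_neg, smul_smul,
      inv_mul_cancel_left₀ hs0] at hparts

end ExpSum

lemma compensated_mul_exp_eq_expSum (ν t : ℂ) (y : ℝ) :
    (cexp (t * y) - 1 - (cexp y - 1) * t) * cexp (-ν * y) =
      expSum Finset.univ ![ν - t, ν, ν - 1] ![1, t - 1, -t] y := by
  simp only [expSum, Fin.sum_univ_three, Matrix.cons_val, smul_eq_mul]
  rw [show -(ν - t) * (y : ℂ) = t * y + -ν * y by ring,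
    show -(ν - 1) * (y : ℂ) = y + -ν * y by ring, Complex.exp_add, Complex.exp_add]
  ring

theorem hasMellin_compensated_mul_exp {s ν t : ℂ} (hs : -2 < s.re) (hs0 : s ≠ 0) (hs1 : s ≠ -1)
    (hν : 1 < ν.re) (ht : t.re < ν.re) :
    HasMellin (fun y : ℝ => (cexp (t * y) - 1 - (cexp y - 1) * t) * cexp (-ν * y)) s
      (Gamma s * ((ν - t) ^ (-s) - ν ^ (-s) + (ν ^ (-s) - (ν - 1) ^ (-s)) * t)) := by
  have hre : ∀ i ∈ Finset.univ, 0 < (![ν - t, ν, ν - 1] i).re := by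
    simpa [Fin.forall_fin_succ] using ⟨ht, zero_lt_one.trans hν, hν⟩
  have hmoments : ∀ k < 2, ∑ i, ![ν - t, ν, ν - 1] i ^ k • ![1, t - 1, -t] i = 0 := by
    intro k hk
    interval_cases k
    all_goals
      simp only [Fin.sum_univ_three, Matrix.cons_val, smul_eq_mul]
      ring
  have hpole : ∀ k : ℕ, s ≠ -k := by
    rintro (_ | _ | k) rfl
    · simp at hs0
    · simp at hs1
    · simp only [Nat.cast_add, Nat.cast_one, neg_re, add_re, natCast_re, one_re] at hs
      linarith [(Nat.cast_nonneg k : (0 : ℝ) ≤ k)]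
  simp only [compensated_mul_exp_eq_expSum]
  convert hasMellin_expSum hre hmoments (by exact_mod_cast hs) hpole using 1
  simp only [Fin.sum_univ_three, Matrix.cons_val, smul_eq_mul]
  ring

lemma ofReal_integral_Ioi_mul_rpow (f : ℝ → ℝ) (r : ℝ) :
    ((∫ y in Ioi (0 : ℝ), f y * y ^ r : ℝ) : ℂ) =
      ∫ y in Ioi (0 : ℝ), (f y : ℂ) * (y : ℂ) ^ (r : ℂ) := by
  rw [← integral_complex_ofReal]
  refine setIntegral_congr_fun measurableSet_Ioi fun y hy => ?_
  simp only [ofReal_mul, ofReal_cpow (le_of_lt hy)]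

theorem stmt_9_general {α ν t : ℂ} (hα : α.re < 2) (hα0 : α ≠ 0) (hα1 : α ≠ 1)
    (hν : 1 < ν.re) (ht : t.re < ν.re) :
    IntegrableOn (fun y : ℝ =>
        (cexp (t * y) - 1 - (cexp y - 1) * t) * cexp (-ν * y) * (y : ℂ) ^ (-(1 + α))) (Ioi 0) ∧
      ∫ y in Ioi (0 : ℝ),
        (cexp (t * y) - 1 - (cexp y - 1) * t) * cexp (-ν * y) * (y : ℂ) ^ (-(1 + α)) =
      Gamma (-α) * ((ν - t) ^ α - ν ^ α + (ν ^ α - (ν - 1) ^ α) * t) := by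
  have h := hasMellin_compensated_mul_exp (s := -α) (by simpa using hα) (neg_ne_zero.mpr hα0)
    (by simpa using hα1) hν ht
  simpa only [HasMellin, MellinConvergent, mellin, neg_neg, smul_eq_mul, neg_add_rev,
    ← sub_eq_add_neg, mul_comm ((_ : ℂ) ^ (-α - 1))] using h

theorem stmt_9 (α ν t : ℝ) (hα : α < 2) (hα0 : α ≠ 0) (hα1 : α ≠ 1)
    (hν : 1 < ν) (ht : t < ν) :
    ∫ y in Set.Ioi (0 : ℝ),
        (Real.exp (t * y) - 1 - (Real.exp y - 1) * t) * Real.exp (-ν * y) * y ^ (-(1 + α)) =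
      Real.Gamma (-α) * ((ν - t) ^ α - ν ^ α + (ν ^ α - (ν - 1) ^ α) * t) := by
  have h := (stmt_9_general (α := α) (ν := ν) (t := t) hα (mod_cast hα0) (mod_cast hα1) hν ht).2
  rw [← ofReal_inj, ofReal_integral_Ioi_mul_rpow]
  push_cast [ofReal_cpow (sub_pos.mpr ht).le, ofReal_cpow (zero_lt_one.trans hν).le,
    ofReal_cpow (sub_pos.mpr hν).le, ← Gamma_ofReal]
  exact h
end

section
/- Let ν > 1 and let t be a real number with t < ν. Then ∫_0^∞ (e^{t y} - 1 - (e^{y} - 1) t) · e^{-ν y} y^{-1} dy = log ν - log(ν - t) + t · log((ν - 1)/ν). -/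
open MeasureTheory

/-!
Against the density `exp (-ν * y) / y`, the compensated integrand splits as
`(exp (t * y) - 1) - t * (exp y - 1)`. Each part is integrable on its own, since the density has
only a first-order pole at `0`, and is a Frullani integral of `x ↦ exp (-x)`.
-/

section ExpFrullani

open Real Set Topology

lemma abs_exp_sub_exp_le (u v : ℝ) : |exp u - exp v| ≤ |u - v| * exp (max u v) := by
  wlog hvu : v ≤ u generalizing u v
  · simpa only [abs_sub_comm, max_comm] using this v u (le_of_not_ge hvu)
  rw [abs_of_nonneg (sub_nonneg.2 (exp_le_exp.2 hvu)), abs_of_nonneg (sub_nonneg.2 hvu),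
    max_eq_left hvu]
  calc exp u - exp v = (1 - exp (-(u - v))) * exp u := by
        rw [sub_mul, one_mul, ← exp_add, neg_sub, sub_add_cancel]
    _ ≤ (u - v) * exp u :=
        mul_le_mul_of_nonneg_right (sub_le_comm.1 (one_sub_le_exp_neg (u - v))) (exp_nonneg u)

lemma norm_inv_smul_exp_neg_mul_sub_le (a b : ℝ) {x : ℝ} (hx : 0 < x) :
    ‖x⁻¹ • (exp (-(a * x)) - exp (-(b * x)))‖ ≤ |a - b| * exp (-min a b * x) := by
  rw [norm_smul, norm_inv, norm_of_nonneg hx.le, norm_eq_abs, inv_mul_le_iff₀ hx]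
  calc |exp (-(a * x)) - exp (-(b * x))|
      ≤ |-(a * x) - -(b * x)| * exp (max (-(a * x)) (-(b * x))) := abs_exp_sub_exp_le _ _
    _ = x * (|a - b| * exp (-min a b * x)) := by
        rw [max_neg_neg, ← min_mul_of_nonneg a b hx.le, ← neg_sub', abs_neg, ← sub_mul, abs_mul,
          abs_of_pos hx, neg_mul]
        ring

variable {a b : ℝ}

lemma integrableOn_inv_smul_exp_neg_mul_sub (ha : 0 < a) (hb : 0 < b) :
    IntegrableOn (fun x ↦ x⁻¹ • (exp (-(a * x)) - exp (-(b * x)))) (Ioi 0) := by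
  have hbound : IntegrableOn (fun x ↦ |a - b| * exp (-min a b * x)) (Ioi 0) :=
    (exp_neg_integrableOn_Ioi 0 (lt_min ha hb)).const_mul _
  refine hbound.mono' (by fun_prop) (ae_restrict_of_forall_mem measurableSet_Ioi ?_)
  exact fun x hx ↦ norm_inv_smul_exp_neg_mul_sub_le a b hx

lemma integral_inv_smul_exp_neg_mul_sub (ha : 0 < a) (hb : 0 < b) :
    ∫ x in Ioi 0, x⁻¹ • (exp (-(a * x)) - exp (-(b * x))) = log b - log a := by
  have hcont : Continuous fun x : ℝ ↦ exp (-x) := by fun_prop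
  have hzero : Filter.Tendsto (fun x : ℝ ↦ exp (-x)) (𝓝[>] 0) (𝓝 1) :=
    (hcont.tendsto' 0 1 (by simp)).mono_left nhdsWithin_le_nhds
  have hfrullani := Frullani.integral_Ioi_eq (hcont.locallyIntegrable.locallyIntegrableOn _) ha hb
    hzero tendsto_exp_neg_atTop_nhds_zero (integrableOn_inv_smul_exp_neg_mul_sub ha hb)
  rwa [sub_zero, smul_eq_mul, mul_one, log_div hb.ne' ha.ne'] at hfrullani

end ExpFrullani

section GammaProcess

open Real Set

lemma exp_mul_sub_one_mul_exp_neg_mul_inv_eq (ν t y : ℝ) :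
    (exp (t * y) - 1) * exp (-ν * y) * y⁻¹ =
      y⁻¹ • (exp (-((ν - t) * y)) - exp (-(ν * y))) := by
  rw [sub_mul, ← exp_add, one_mul, smul_eq_mul, mul_comm]
  ring_nf

variable {ν t : ℝ}

lemma integrableOn_exp_mul_sub_one_mul_exp_neg_mul_inv (hν : 0 < ν) (ht : t < ν) :
    IntegrableOn (fun y ↦ (exp (t * y) - 1) * exp (-ν * y) * y⁻¹) (Ioi 0) := by
  simpa only [exp_mul_sub_one_mul_exp_neg_mul_inv_eq] using
    integrableOn_inv_smul_exp_neg_mul_sub (sub_pos.2 ht) hν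

/-- The Lévy–Khintchine exponent of a gamma process with rate `ν` and unit shape. -/
lemma integral_exp_mul_sub_one_mul_exp_neg_mul_inv (hν : 0 < ν) (ht : t < ν) :
    ∫ y in Ioi 0, (exp (t * y) - 1) * exp (-ν * y) * y⁻¹ = log ν - log (ν - t) := by
  simpa only [exp_mul_sub_one_mul_exp_neg_mul_inv_eq] using
    integral_inv_smul_exp_neg_mul_sub (sub_pos.2 ht) hν

end GammaProcess

theorem stmt_10 (ν t : ℝ) (hν : 1 < ν) (ht : t < ν) :
    ∫ y in Set.Ioi (0 : ℝ),
        (Real.exp (t * y) - 1 - (Real.exp y - 1) * t) * Real.exp (-ν * y) * y⁻¹ =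
      Real.log ν - Real.log (ν - t) + t * Real.log ((ν - 1) / ν) := by
  have hν₀ : 0 < ν := one_pos.trans hν
  calc
    _ = ∫ y in Set.Ioi (0 : ℝ), ((Real.exp (t * y) - 1) * Real.exp (-ν * y) * y⁻¹ -
          t * ((Real.exp (1 * y) - 1) * Real.exp (-ν * y) * y⁻¹)) := by
      congr with y
      ring_nf
    _ = (Real.log ν - Real.log (ν - t)) - t * (Real.log ν - Real.log (ν - 1)) := by
      rw [integral_sub (integrableOn_exp_mul_sub_one_mul_exp_neg_mul_inv hν₀ ht)
          ((integrableOn_exp_mul_sub_one_mul_exp_neg_mul_inv hν₀ hν).const_mul t),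
        integral_const_mul, integral_exp_mul_sub_one_mul_exp_neg_mul_inv hν₀ ht,
        integral_exp_mul_sub_one_mul_exp_neg_mul_inv hν₀ hν]
    _ = _ := by
      rw [Real.log_div (sub_pos.2 hν).ne' hν₀.ne']
      ring
end

section
/- Let ν > 1 and let t be a real number with t < ν. Then ∫_0^∞ (e^{t y} - 1 - (e^{y} - 1) t) · e^{-ν y} y^{-2} dy = -ν log ν + (ν - t) log(ν - t) + (ν log ν - (ν - 1) log(ν - 1)) · t. -/
open MeasureTheory

/-! The function `z ↦ e^{-zy} / y²` has second derivative `e^{-zy}`, and the Laplace transform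
`∫₀^∞ e^{-zy} dy = z⁻¹` is the second derivative of `z log z`. Integrating over `y` the
first-order Taylor formula with integral remainder for the former, from `a` to `a + h`,
therefore yields the first-order Taylor formula for the latter. Applying this to the increments
`-t` and `-1` at `ν` and combining the two identities with weights `1` and `-t` cancels the terms
linear in `y`. -/

section Taylor

variable {𝕜 E : Type*} [RCLike 𝕜] [NormedAddCommGroup E] [NormedSpace 𝕜 E] [NormedSpace ℝ E]
  [IsScalarTower ℝ 𝕜 E] [CompleteSpace E]

lemma sq_smul_integral_one_sub_smul_eq_taylor_remainder {f f' f'' : 𝕜 → E} {z h : 𝕜}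
    (hcont : ContinuousOn (fun s : ℝ ↦ f'' (z + s • h)) (Set.Icc 0 1))
    (hf : ∀ s ∈ Set.Icc (0 : ℝ) 1, HasDerivAt f (f' (z + s • h)) (z + s • h))
    (hf' : ∀ s ∈ Set.Icc (0 : ℝ) 1, HasDerivAt f' (f'' (z + s • h)) (z + s • h)) :
    h ^ 2 • ∫ s in (0 : ℝ)..1, (1 - s) • f'' (z + s • h) = f (z + h) - f z - h • f' z := by
  have hweight (s : ℝ) : (z + h - (z + s • h)) • f'' (z + s • h) =
      h • ((1 - s) • f'' (z + s • h)) := by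
    rw [add_sub_add_left_eq_sub, smul_comm h, ← smul_assoc, sub_smul 1 s h, one_smul]
  -- Vary the base point `w` of the Taylor polynomial, keeping the evaluation point `z + h` fixed.
  have hderiv : ∀ s ∈ Set.Icc (0 : ℝ) 1, HasDerivAt (fun w ↦ f w + (z + h - w) • f' w)
      ((z + h - (z + s • h)) • f'' (z + s • h)) (z + s • h) := fun s hs ↦ by
    have := (hf s hs).add (((hasDerivAt_id _).const_sub (z + h)).smul (hf' s hs))
    exact this.congr_deriv (by simp)
  have hftc := intervalIntegral.integral_unitInterval_deriv_eq_sub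
    (f' := fun w ↦ (z + h - w) • f'' w) (ContinuousOn.smul (by fun_prop) hcont) hderiv
  simp only [hweight, intervalIntegral.integral_smul, smul_smul, ← sq] at hftc
  rw [hftc, sub_self, zero_smul, add_zero, add_sub_cancel_left, sub_sub]

end Taylor

lemma sq_mul_integral_one_sub_smul_cexp (a h : ℂ) {y : ℂ} (hy : y ≠ 0) :
    h ^ 2 * ∫ s in (0 : ℝ)..1, (1 - s) • Complex.exp (-(a + s • h) * y) =
      (Complex.exp (-(a + h) * y) - Complex.exp (-a * y) + h * y * Complex.exp (-a * y)) *
        y ^ (-2 : ℤ) := by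
  have hexp (w : ℂ) : HasDerivAt (fun w ↦ Complex.exp (-w * y)) (-y * Complex.exp (-w * y)) w := by
    simpa [mul_comm] using ((hasDerivAt_id w).neg.mul_const y).cexp
  have hf (w : ℂ) : HasDerivAt (fun w ↦ Complex.exp (-w * y) * y ^ (-2 : ℤ))
      (-Complex.exp (-w * y) * y⁻¹) w :=
    ((hexp w).mul_const _).congr_deriv (by field_simp)
  have hf' (w : ℂ) : HasDerivAt (fun w ↦ -Complex.exp (-w * y) * y⁻¹)
      (Complex.exp (-w * y)) w :=
    ((hexp w).neg.mul_const _).congr_deriv (by field_simp)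
  rw [← smul_eq_mul (h ^ 2), sq_smul_integral_one_sub_smul_eq_taylor_remainder
    (f'' := fun w ↦ Complex.exp (-w * y)) (Continuous.continuousOn (by fun_prop))
    (fun _ _ ↦ hf _) (fun _ _ ↦ hf' _), smul_eq_mul]
  field_simp
  ring

lemma sq_mul_integral_one_sub_smul_inv {a h : ℂ}
    (hseg : ∀ s ∈ Set.Icc (0 : ℝ) 1, a + s • h ∈ Complex.slitPlane) :
    h ^ 2 * ∫ s in (0 : ℝ)..1, (1 - s) • (a + s • h)⁻¹ =
      (a + h) * Complex.log (a + h) - a * Complex.log a - h * (Complex.log a + 1) := by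
  have hf {w : ℂ} (hw : w ∈ Complex.slitPlane) :
      HasDerivAt (fun w ↦ w * Complex.log w) (Complex.log w + 1) w :=
    ((hasDerivAt_id w).mul (Complex.hasDerivAt_log hw)).congr_deriv (by
      simp [mul_inv_cancel₀ (Complex.slitPlane_ne_zero hw)])
  have hf' {w : ℂ} (hw : w ∈ Complex.slitPlane) : HasDerivAt (fun w ↦ Complex.log w + 1) w⁻¹ w :=
    (Complex.hasDerivAt_log hw).add_const 1
  have hcont : ContinuousOn (fun s : ℝ ↦ (a + s • h)⁻¹) (Set.Icc 0 1) :=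
    ContinuousOn.inv₀ (by fun_prop) fun s hs ↦ Complex.slitPlane_ne_zero (hseg s hs)
  exact sq_smul_integral_one_sub_smul_eq_taylor_remainder hcont
    (fun s hs ↦ hf (hseg s hs)) (fun s hs ↦ hf' (hseg s hs))

lemma integral_cexp_neg_mul_Ioi {z : ℂ} (hz : 0 < z.re) :
    ∫ y : ℝ in Set.Ioi 0, Complex.exp (-z * y) = z⁻¹ := by
  simpa using integral_exp_mul_complex_Ioi (a := -z) (by simpa using hz) 0

lemma integrable_one_sub_smul_cexp_prod {a h : ℂ} (ha : 0 < a.re) (hah : 0 < (a + h).re) :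
    Integrable (fun p : ℝ × ℝ ↦ (1 - p.1) • Complex.exp (-(a + p.1 • h) * p.2))
      ((volume.restrict (Set.Ioc 0 1)).prod (volume.restrict (Set.Ioi 0))) := by
  set m := min a.re (a + h).re
  have hexp : Integrable (fun y : ℝ ↦ Real.exp (-m * y)) (volume.restrict (Set.Ioi 0)) :=
    integrableOn_exp_mul_Ioi (neg_lt_zero.mpr (lt_min ha hah)) 0
  refine (hexp.comp_snd (volume.restrict (Set.Ioc 0 1))).mono'
    (Continuous.aestronglyMeasurable (by fun_prop)) ?_
  rw [Measure.prod_restrict]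
  filter_upwards [ae_restrict_mem (measurableSet_Ioc.prod measurableSet_Ioi)] with ⟨s, y⟩ ⟨hs, hy⟩
  have hm : m ≤ (a + s • h).re := (convex_halfSpace_re_ge m).add_smul_mem
    (min_le_left a.re _) (min_le_right _ (a + h).re) (Set.Ioc_subset_Icc_self hs)
  have hweight : |1 - s| ≤ 1 := abs_le.mpr ⟨by linarith [hs.2], by linarith [hs.1]⟩
  have hdecay : -(a + s • h).re * y ≤ -m * y :=
    mul_le_mul_of_nonneg_right (neg_le_neg hm) (le_of_lt hy)
  calc ‖(1 - s) • Complex.exp (-(a + s • h) * y)‖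
      = |1 - s| * Real.exp (-(a + s • h).re * y) := by
        rw [norm_smul, Real.norm_eq_abs, Complex.norm_exp, Complex.re_mul_ofReal, Complex.neg_re]
    _ ≤ 1 * Real.exp (-m * y) := by gcongr
    _ = Real.exp (-m * y) := one_mul _

lemma integrableOn_cexp_taylor_remainder_mul_zpow {a h : ℂ} (ha : 0 < a.re)
    (hah : 0 < (a + h).re) :
    IntegrableOn (fun y : ℝ ↦ (Complex.exp (-(a + h) * y) - Complex.exp (-a * y) +
      h * y * Complex.exp (-a * y)) * (y : ℂ) ^ (-2 : ℤ)) (Set.Ioi 0) := by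
  refine ((integrable_one_sub_smul_cexp_prod ha hah).integral_prod_right.const_mul
    (h ^ 2)).congr ?_
  filter_upwards [ae_restrict_mem measurableSet_Ioi] with y hy
  rw [← sq_mul_integral_one_sub_smul_cexp a h (Complex.ofReal_ne_zero.mpr (ne_of_gt hy)),
    intervalIntegral.integral_of_le zero_le_one]

lemma integral_cexp_taylor_remainder_mul_zpow {a h : ℂ} (ha : 0 < a.re)
    (hah : 0 < (a + h).re) :
    ∫ y : ℝ in Set.Ioi 0, (Complex.exp (-(a + h) * y) - Complex.exp (-a * y) +
        h * y * Complex.exp (-a * y)) * (y : ℂ) ^ (-2 : ℤ) =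
      (a + h) * Complex.log (a + h) - a * Complex.log a - h * (Complex.log a + 1) := by
  have hre : ∀ s ∈ Set.Icc (0 : ℝ) 1, 0 < (a + s • h).re := fun s hs ↦
    (convex_halfSpace_re_gt 0).add_smul_mem ha hah hs
  calc ∫ y : ℝ in Set.Ioi 0, (Complex.exp (-(a + h) * y) - Complex.exp (-a * y) +
        h * y * Complex.exp (-a * y)) * (y : ℂ) ^ (-2 : ℤ)
      = ∫ y : ℝ in Set.Ioi 0,
          h ^ 2 * ∫ s in (0 : ℝ)..1, (1 - s) • Complex.exp (-(a + s • h) * y) :=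
        setIntegral_congr_fun measurableSet_Ioi fun y hy ↦
          (sq_mul_integral_one_sub_smul_cexp a h (Complex.ofReal_ne_zero.mpr (ne_of_gt hy))).symm
    _ = h ^ 2 * ∫ s in (0 : ℝ)..1, ∫ y : ℝ in Set.Ioi 0,
          (1 - s) • Complex.exp (-(a + s • h) * y) := by
        have hint := integrable_one_sub_smul_cexp_prod ha hah
        rw [← Set.uIoc_of_le zero_le_one] at hint
        rw [integral_const_mul, intervalIntegral_integral_swap hint]
    _ = h ^ 2 * ∫ s in (0 : ℝ)..1, (1 - s) • (a + s • h)⁻¹ := by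
        congr 1
        refine intervalIntegral.integral_congr fun s hs ↦ ?_
        rw [Set.uIcc_of_le zero_le_one] at hs
        simp only [integral_smul, integral_cexp_neg_mul_Ioi (hre s hs)]
    _ = _ := sq_mul_integral_one_sub_smul_inv fun s hs ↦ Or.inl (hre s hs)

theorem stmt_11_general (ν t : ℂ) (hν : 1 < ν.re) (ht : t.re < ν.re) :
    ∫ y : ℝ in Set.Ioi 0,
        (Complex.exp (t * y) - 1 - (Complex.exp y - 1) * t) * Complex.exp (-ν * y) *
          (y : ℂ) ^ (-2 : ℤ) =
      -ν * Complex.log ν + (ν - t) * Complex.log (ν - t) +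
        (ν * Complex.log ν - (ν - 1) * Complex.log (ν - 1)) * t := by
  have hν₀ : 0 < ν.re := zero_lt_one.trans hν
  have hνt : 0 < (ν + -t).re := by simpa using ht
  have hν₁ : 0 < (ν + -1).re := by simpa using hν
  have hexp (r : ℂ) (y : ℝ) :
      Complex.exp (-(ν + -r) * y) = Complex.exp (r * y) * Complex.exp (-ν * y) := by
    rw [← Complex.exp_add]
    ring_nf
  have hsub := integral_sub (integrableOn_cexp_taylor_remainder_mul_zpow hν₀ hνt)
    ((integrableOn_cexp_taylor_remainder_mul_zpow hν₀ hν₁).const_mul t)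
  rw [integral_const_mul, integral_cexp_taylor_remainder_mul_zpow hν₀ hνt,
    integral_cexp_taylor_remainder_mul_zpow hν₀ hν₁] at hsub
  refine Eq.trans (integral_congr_ae (.of_forall fun y ↦ ?_)) (hsub.trans ?_)
  · simp only [hexp, one_mul]
    ring
  · ring_nf

theorem stmt_11 (ν t : ℝ) (hν : 1 < ν) (ht : t < ν) :
    ∫ y in Set.Ioi (0 : ℝ),
        (Real.exp (t * y) - 1 - (Real.exp y - 1) * t) * Real.exp (-ν * y) * y ^ (-2 : ℤ) =
      -ν * Real.log ν + (ν - t) * Real.log (ν - t) +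
        (ν * Real.log ν - (ν - 1) * Real.log (ν - 1)) * t := by
  rw [← Complex.ofReal_inj, ← integral_complex_ofReal]
  push_cast [Complex.ofReal_log (show 0 ≤ ν by linarith), Complex.ofReal_log (sub_pos.2 hν).le,
    Complex.ofReal_log (sub_pos.2 ht).le]
  exact stmt_11_general ν t hν ht
end

section
/- Let ν > 0 and let t be a real number with ν + t > 0. Then ∫_0^∞ (e^{-t y} - 1 - (e^{-y} - 1) t) · e^{-ν y} y^{-2} dy = -ν log ν + (ν log ν - (ν + 1) log(ν + 1)) · t + (ν + t) log(ν + t). -/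
open MeasureTheory

/-!
For `a, b > 0` the Bregman divergence of `exp` between `-a * y` and `-b * y` is
`e^{-ay} - e^{-by} + (a - b) y e^{-by}`. It vanishes to second order at `y = 0`, so it is integrable
against `dy / y²`; integrating by parts reduces its integral to Frullani's integral
`∫ (e^{-by} - e^{-ay}) dy / y = log (a / b)`, with value `a log (a / b) - (a - b)`. The compensated
integrand is the combination of the divergences for `(a, b) = (ν + t, ν)` and `(ν + 1, ν)` with
coefficients `1` and `-t`, in which the terms linear in `y` cancel.
-/

section

open Real Set Filter Topology

lemma integral_Ioi_div_sq_eq_integral_deriv_div {f f' : ℝ → ℝ}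
    (hf : ∀ y ∈ Ioi 0, HasDerivAt f (f' y) y)
    (hf_int : IntegrableOn (fun y ↦ f y / y ^ 2) (Ioi 0))
    (hf'_int : IntegrableOn (fun y ↦ f' y / y) (Ioi 0))
    (hf_zero : Tendsto (fun y ↦ f y / y) (𝓝[>] 0) (𝓝 0))
    (hf_top : Tendsto (fun y ↦ f y / y) atTop (𝓝 0)) :
    ∫ y in Ioi 0, f y / y ^ 2 = ∫ y in Ioi 0, f' y / y := by
  have neg_inv_deriv : ∀ y ∈ Ioi (0 : ℝ), HasDerivAt (fun y ↦ -y⁻¹) (y ^ 2)⁻¹ y :=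
    fun y hy ↦ (hasDerivAt_inv (ne_of_gt hy)).fun_neg.congr_deriv (neg_neg _)
  have mul_neg_inv (g : ℝ → ℝ) : (g * fun y ↦ -y⁻¹) = fun y ↦ -(g y / y) := by
    funext y
    rw [Pi.mul_apply, mul_neg, div_eq_mul_inv]
  have parts := integral_Ioi_mul_deriv_eq_deriv_mul (a := 0) (a' := -0) (b' := -0)
    hf neg_inv_deriv hf_int
    (by rw [mul_neg_inv]; exact hf'_int.neg)
    (by rw [mul_neg_inv]; exact hf_zero.neg)
    (by rw [mul_neg_inv]; exact hf_top.neg)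
  simpa only [mul_neg, ← div_eq_mul_inv, integral_neg, sub_self, zero_sub, neg_neg] using parts

/-- The Bregman divergence of `Real.exp`: the gap at `x` between `exp` and its tangent line at `y`.
At `x = -a * s`, `y = -b * s` it is `exp (-a * s)` compensated to second order at `s = 0`, as
integrability against `ds / s ^ 2` requires. -/
noncomputable def expBregman (x y : ℝ) : ℝ := exp x - exp y - (x - y) * exp y

lemma exp_sub_exp_le_sub_mul_exp (x y : ℝ) : exp x - exp y ≤ (x - y) * exp x := by
  have tangent_le : (y - x + 1) * exp x ≤ exp (y - x) * exp x :=
    mul_le_mul_of_nonneg_right (add_one_le_exp _) (exp_pos x).le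
  rw [← exp_add, sub_add_cancel] at tangent_le
  linarith

lemma abs_exp_sub_exp_le_s14 (x y : ℝ) : |exp x - exp y| ≤ |x - y| * (exp x + exp y) := by
  wlog hxy : y ≤ x generalizing x y
  · rw [abs_sub_comm, abs_sub_comm x, add_comm]
    exact this y x (le_of_not_ge hxy)
  rw [abs_of_nonneg (sub_nonneg.2 (exp_le_exp.2 hxy)), abs_of_nonneg (sub_nonneg.2 hxy), mul_add]
  exact (exp_sub_exp_le_sub_mul_exp x y).trans
    (le_add_of_nonneg_right (mul_nonneg (sub_nonneg.2 hxy) (exp_pos y).le))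

lemma expBregman_nonneg (x y : ℝ) : 0 ≤ expBregman x y := by
  have := exp_sub_exp_le_sub_mul_exp y x
  unfold expBregman
  linarith

lemma expBregman_le (x y : ℝ) : expBregman x y ≤ (x - y) ^ 2 * (exp x + exp y) :=
  calc expBregman x y
    _ ≤ (x - y) * (exp x - exp y) := by
      have := exp_sub_exp_le_sub_mul_exp x y
      unfold expBregman
      linarith
    _ ≤ |x - y| * |exp x - exp y| := (le_abs_self _).trans_eq (abs_mul _ _)
    _ ≤ |x - y| * (|x - y| * (exp x + exp y)) :=
      mul_le_mul_of_nonneg_left (abs_exp_sub_exp_le_s14 x y) (abs_nonneg _)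
    _ = (x - y) ^ 2 * (exp x + exp y) := by rw [← mul_assoc, abs_mul_abs_self, sq]

lemma expBregman_neg_mul_le (a b y : ℝ) :
    expBregman (-a * y) (-b * y) ≤ (a - b) ^ 2 * y ^ 2 * (exp (-a * y) + exp (-b * y)) :=
  (expBregman_le _ _).trans_eq (by ring)

lemma hasDerivAt_expBregman_neg_mul (a b y : ℝ) :
    HasDerivAt (fun y ↦ expBregman (-a * y) (-b * y))
      (a * (exp (-b * y) - exp (-a * y)) - (a - b) * b * y * exp (-b * y)) y := by
  have linear (c : ℝ) : HasDerivAt (fun y ↦ -c * y) (-c) y := hasDerivAt_const_mul (-c)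
  refine (((linear a).exp.sub (linear b).exp).sub
    (((linear a).sub (linear b)).mul (linear b).exp)).congr_deriv ?_
  simp only [Pi.sub_apply]
  ring

lemma tendsto_expBregman_neg_mul_div (a b : ℝ) {l : Filter ℝ} (hl : ∀ᶠ y in l, 0 < y)
    (ha : Tendsto (fun y ↦ y * exp (-a * y)) l (𝓝 0))
    (hb : Tendsto (fun y ↦ y * exp (-b * y)) l (𝓝 0)) :
    Tendsto (fun y ↦ expBregman (-a * y) (-b * y) / y) l (𝓝 0) := by
  have bound_tendsto :
      Tendsto (fun y ↦ (a - b) ^ 2 * (y * exp (-a * y) + y * exp (-b * y))) l (𝓝 0) := by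
    simpa using (ha.add hb).const_mul ((a - b) ^ 2)
  refine squeeze_zero' ?_ ?_ bound_tendsto
  · filter_upwards [hl] with y hy using div_nonneg (expBregman_nonneg _ _) hy.le
  · filter_upwards [hl] with y hy
    rw [div_le_iff₀ hy]
    exact (expBregman_neg_mul_le a b y).trans_eq (by ring)

lemma tendsto_expBregman_neg_mul_div_nhdsGT_zero (a b : ℝ) :
    Tendsto (fun y ↦ expBregman (-a * y) (-b * y) / y) (𝓝[>] 0) (𝓝 0) := by
  have mul_exp_tendsto (c : ℝ) : Tendsto (fun y ↦ y * exp (-c * y)) (𝓝[>] 0) (𝓝 0) :=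
    Continuous.tendsto' (by fun_prop) 0 0 (by simp) |>.mono_left nhdsWithin_le_nhds
  exact tendsto_expBregman_neg_mul_div a b self_mem_nhdsWithin
    (mul_exp_tendsto a) (mul_exp_tendsto b)

variable {a b : ℝ}

lemma tendsto_expBregman_neg_mul_div_atTop (ha : 0 < a) (hb : 0 < b) :
    Tendsto (fun y ↦ expBregman (-a * y) (-b * y) / y) atTop (𝓝 0) := by
  have mul_exp_tendsto {c : ℝ} (hc : 0 < c) : Tendsto (fun y ↦ y * exp (-c * y)) atTop (𝓝 0) := by
    simpa only [rpow_one] using tendsto_rpow_mul_exp_neg_mul_atTop_nhds_zero 1 c hc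
  exact tendsto_expBregman_neg_mul_div a b (eventually_gt_atTop 0)
    (mul_exp_tendsto ha) (mul_exp_tendsto hb)

lemma integrableOn_const_mul_exp_add_exp (ha : 0 < a) (hb : 0 < b) (c : ℝ) :
    IntegrableOn (fun y ↦ c * (exp (-a * y) + exp (-b * y))) (Ioi 0) :=
  ((exp_neg_integrableOn_Ioi 0 ha).add (exp_neg_integrableOn_Ioi 0 hb)).const_mul c

lemma integrableOn_exp_sub_exp_div (ha : 0 < a) (hb : 0 < b) :
    IntegrableOn (fun y ↦ (exp (-a * y) - exp (-b * y)) / y) (Ioi 0) := by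
  refine (integrableOn_const_mul_exp_add_exp ha hb |a - b|).mono'
    (Measurable.aestronglyMeasurable (by fun_prop)) ?_
  filter_upwards [ae_restrict_mem measurableSet_Ioi] with y (hy : 0 < y)
  rw [norm_div, norm_of_nonneg hy.le, norm_eq_abs, div_le_iff₀ hy]
  calc |exp (-a * y) - exp (-b * y)|
    _ ≤ |-a * y - -b * y| * (exp (-a * y) + exp (-b * y)) := abs_exp_sub_exp_le_s14 _ _
    _ = |a - b| * (exp (-a * y) + exp (-b * y)) * y := by
      rw [← sub_mul, abs_mul, abs_of_pos hy, neg_sub_neg, abs_sub_comm]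
      ring

lemma integral_exp_sub_exp_div (ha : 0 < a) (hb : 0 < b) :
    ∫ y in Ioi 0, (exp (-a * y) - exp (-b * y)) / y = log (b / a) := by
  have exp_neg_continuous : Continuous fun x : ℝ ↦ exp (-x) := by fun_prop
  have frullani := Frullani.integral_Ioi_eq (f := fun x ↦ exp (-x)) (L := 1) (R := 0)
    (exp_neg_continuous.locallyIntegrable.locallyIntegrableOn _) ha hb
    ((exp_neg_continuous.tendsto' 0 1 (by simp)).mono_left nhdsWithin_le_nhds)
    tendsto_exp_neg_atTop_nhds_zero
    (by simpa [div_eq_inv_mul] using integrableOn_exp_sub_exp_div ha hb)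
  simpa [div_eq_inv_mul] using frullani

lemma integrableOn_expBregman_neg_mul_div_sq (ha : 0 < a) (hb : 0 < b) :
    IntegrableOn (fun y ↦ expBregman (-a * y) (-b * y) / y ^ 2) (Ioi 0) := by
  refine (integrableOn_const_mul_exp_add_exp ha hb ((a - b) ^ 2)).mono'
    (Measurable.aestronglyMeasurable (by unfold expBregman; fun_prop)) ?_
  filter_upwards [ae_restrict_mem measurableSet_Ioi] with y (hy : 0 < y)
  rw [norm_of_nonneg (div_nonneg (expBregman_nonneg _ _) (sq_nonneg y)),
    div_le_iff₀ (by positivity)]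
  exact (expBregman_neg_mul_le a b y).trans_eq (by ring)

lemma integral_expBregman_neg_mul_div_sq (ha : 0 < a) (hb : 0 < b) :
    ∫ y in Ioi 0, expBregman (-a * y) (-b * y) / y ^ 2 = a * log (a / b) - (a - b) := by
  have frullani_integrable := (integrableOn_exp_sub_exp_div hb ha).const_mul a
  have exp_integrable := (exp_neg_integrableOn_Ioi 0 hb).const_mul ((a - b) * b)
  have deriv_div_eq : EqOn
      (fun y ↦ (a * (exp (-b * y) - exp (-a * y)) - (a - b) * b * y * exp (-b * y)) / y)
      (fun y ↦ a * ((exp (-b * y) - exp (-a * y)) / y) - (a - b) * b * exp (-b * y)) (Ioi 0) := by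
    intro y (hy : 0 < y)
    field_simp
  calc ∫ y in Ioi 0, expBregman (-a * y) (-b * y) / y ^ 2
    _ = ∫ y in Ioi 0,
          (a * (exp (-b * y) - exp (-a * y)) - (a - b) * b * y * exp (-b * y)) / y :=
      integral_Ioi_div_sq_eq_integral_deriv_div
        (fun y _ ↦ hasDerivAt_expBregman_neg_mul a b y)
        (integrableOn_expBregman_neg_mul_div_sq ha hb)
        ((integrableOn_congr_fun deriv_div_eq measurableSet_Ioi).2
          (frullani_integrable.sub exp_integrable))
        (tendsto_expBregman_neg_mul_div_nhdsGT_zero a b)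
        (tendsto_expBregman_neg_mul_div_atTop ha hb)
    _ = a * (∫ y in Ioi 0, (exp (-b * y) - exp (-a * y)) / y) -
          (a - b) * b * ∫ y in Ioi 0, exp (-b * y) := by
      rw [setIntegral_congr_fun measurableSet_Ioi deriv_div_eq,
        integral_sub frullani_integrable exp_integrable, integral_const_mul, integral_const_mul]
    _ = a * log (a / b) - (a - b) := by
      rw [integral_exp_sub_exp_div hb ha, integral_exp_mul_Ioi (neg_lt_zero.2 hb), mul_zero,
        exp_zero]
      field_simp

end

theorem stmt_14 (ν t : ℝ) (hν : 0 < ν) (ht : 0 < ν + t) :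
    ∫ y in Set.Ioi (0 : ℝ),
        (Real.exp (-t * y) - 1 - (Real.exp (-y) - 1) * t) * Real.exp (-ν * y) * y ^ (-2 : ℤ) =
      -ν * Real.log ν + (ν * Real.log ν - (ν + 1) * Real.log (ν + 1)) * t +
        (ν + t) * Real.log (ν + t) := by
  have hν₁ : 0 < ν + 1 := by linarith
  have integrand_eq (y : ℝ) :
      (Real.exp (-t * y) - 1 - (Real.exp (-y) - 1) * t) * Real.exp (-ν * y) * y ^ (-2 : ℤ) =
        expBregman (-(ν + t) * y) (-ν * y) / y ^ 2 -
          t * (expBregman (-(ν + 1) * y) (-ν * y) / y ^ 2) := by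
    have exp_split (s : ℝ) : Real.exp (-(ν + s) * y) = Real.exp (-s * y) * Real.exp (-ν * y) := by
      rw [← Real.exp_add]
      ring_nf
    simp only [expBregman, exp_split, zpow_neg, zpow_ofNat, neg_one_mul]
    ring
  simp_rw [integrand_eq]
  rw [integral_sub (integrableOn_expBregman_neg_mul_div_sq ht hν)
      ((integrableOn_expBregman_neg_mul_div_sq hν₁ hν).const_mul t),
    integral_const_mul, integral_expBregman_neg_mul_div_sq ht hν,
    integral_expBregman_neg_mul_div_sq hν₁ hν,
    Real.log_div ht.ne' hν.ne', Real.log_div hν₁.ne' hν.ne']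
  ring
end

section
/- Let ν > 1 and let t be a real number with t < ν. Then the improper integral ∫_ν^∞ (log u - log(u - t) + t · log((u - 1)/u)) du converges and equals -ν log ν + (ν - t) log(ν - t) + (ν log ν - (ν - 1) log(ν - 1)) · t. -/
open MeasureTheory

/-!
At infinity `log u - log (u - s) = s / u + O(u⁻²)`. Subtracting the leading term `s / u` leaves a
remainder which is nonnegative, by `log x ≥ 1 - x⁻¹`, and has an elementary primitive with a finite
limit at infinity, so its integral over `(a, ∞)` converges and can be evaluated. The integrand of
the theorem is the remainder for `s = t` minus `t` times the remainder for `s = 1`: the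
non-integrable terms `t / u` cancel.
-/

section LogShift

open Filter Set Topology

/-- The remainder of `log u - log (u - s)` after its leading term `s / u` as `u → ∞`, which makes
it integrable at infinity. -/
noncomputable def logShiftRemainder (s u : ℝ) : ℝ :=
  Real.log u - Real.log (u - s) - s / u

/-- The primitive in `u` of `logShiftRemainder s u`, normalized to have no additive constant; its
limit at infinity is then `s`, not `0`. -/
noncomputable def logShiftPrimitive (s u : ℝ) : ℝ :=
  u * Real.log u - (u - s) * Real.log (u - s) - s * Real.log u

variable {s u a : ℝ}

lemma logShiftRemainder_nonneg (hu : 0 < u) (hsu : s < u) : 0 ≤ logShiftRemainder s u := by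
  have hus : 0 < u - s := sub_pos.2 hsu
  have hlog : s / u ≤ Real.log u - Real.log (u - s) :=
    calc s / u = 1 - (u / (u - s))⁻¹ := by field_simp; ring
      _ ≤ Real.log (u / (u - s)) := Real.one_sub_inv_le_log_of_pos (div_pos hu hus)
      _ = Real.log u - Real.log (u - s) := Real.log_div hu.ne' hus.ne'
  exact sub_nonneg.2 hlog

lemma hasDerivAt_logShiftPrimitive (hu : u ≠ 0) (hus : u ≠ s) :
    HasDerivAt (logShiftPrimitive s) (logShiftRemainder s u) u := by
  have hshift := (Real.hasDerivAt_mul_log (sub_ne_zero.2 hus)).comp_sub_const u s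
  refine (((Real.hasDerivAt_mul_log hu).sub hshift).sub
    ((Real.hasDerivAt_log hu).const_mul s)).congr_deriv ?_
  rw [logShiftRemainder]
  ring

lemma logShiftPrimitive_eq (hu : u ≠ 0) (hus : u ≠ s) :
    logShiftPrimitive s u =
      -(u * Real.log (1 + -s / u)) + s * (Real.log (u + -s) - Real.log u) := by
  have hquot : 1 + -s / u = (u - s) / u := by field_simp; ring
  rw [hquot, Real.log_div (sub_ne_zero.2 hus) hu, ← sub_eq_add_neg, logShiftPrimitive]
  ring

lemma tendsto_logShiftPrimitive_atTop (s : ℝ) :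
    Tendsto (logShiftPrimitive s) atTop (𝓝 s) := by
  have hlim : Tendsto
      (fun u ↦ -(u * Real.log (1 + -s / u)) + s * (Real.log (u + -s) - Real.log u))
      atTop (𝓝 s) := by
    simpa only [neg_neg, mul_zero, add_zero] using
      (Real.tendsto_mul_log_one_add_div_atTop (-s)).neg.add
        ((Real.tendsto_log_comp_add_sub_log (-s)).const_mul s)
  refine hlim.congr' ?_
  filter_upwards [eventually_ne_atTop 0, eventually_ne_atTop s] with u hu hus
  exact (logShiftPrimitive_eq hu hus).symm

lemma integrableOn_Ioi_logShiftRemainder (ha : 0 < a) (hsa : s < a) :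
    IntegrableOn (logShiftRemainder s) (Ioi a) :=
  integrableOn_Ioi_deriv_of_nonneg'
    (fun _ hu ↦ hasDerivAt_logShiftPrimitive (ha.trans_le hu).ne' (hsa.trans_le hu).ne')
    (fun _ hu ↦ logShiftRemainder_nonneg (ha.trans hu) (hsa.trans hu))
    (tendsto_logShiftPrimitive_atTop s)

lemma integral_Ioi_logShiftRemainder (ha : 0 < a) (hsa : s < a) :
    ∫ u in Ioi a, logShiftRemainder s u = s - logShiftPrimitive s a :=
  integral_Ioi_of_hasDerivAt_of_nonneg'
    (fun _ hu ↦ hasDerivAt_logShiftPrimitive (ha.trans_le hu).ne' (hsa.trans_le hu).ne')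
    (fun _ hu ↦ logShiftRemainder_nonneg (ha.trans hu) (hsa.trans hu))
    (tendsto_logShiftPrimitive_atTop s)

lemma logShiftRemainder_sub_mul_logShiftRemainder_one (t : ℝ) (hu : u ≠ 0) (hu₁ : u ≠ 1) :
    logShiftRemainder t u - t * logShiftRemainder 1 u =
      Real.log u - Real.log (u - t) + t * Real.log ((u - 1) / u) := by
  rw [logShiftRemainder, logShiftRemainder, Real.log_div (sub_ne_zero.2 hu₁) hu]
  ring

end LogShift

theorem stmt_15 (ν t : ℝ) (hν : 1 < ν) (ht : t < ν) :
    IntegrableOn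
      (fun u : ℝ => Real.log u - Real.log (u - t) + t * Real.log ((u - 1) / u))
      (Set.Ioi ν) ∧
    ∫ u in Set.Ioi ν, (Real.log u - Real.log (u - t) + t * Real.log ((u - 1) / u)) =
      -ν * Real.log ν + (ν - t) * Real.log (ν - t) +
        (ν * Real.log ν - (ν - 1) * Real.log (ν - 1)) * t := by
  have hν₀ : 0 < ν := one_pos.trans hν
  have hint_t := integrableOn_Ioi_logShiftRemainder hν₀ ht
  have hint_one := (integrableOn_Ioi_logShiftRemainder hν₀ hν).const_mul t
  have hdecomp : Set.EqOn (fun u ↦ logShiftRemainder t u - t * logShiftRemainder 1 u)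
      (fun u ↦ Real.log u - Real.log (u - t) + t * Real.log ((u - 1) / u)) (Set.Ioi ν) :=
    fun u hu ↦ logShiftRemainder_sub_mul_logShiftRemainder_one t (hν₀.trans hu).ne'
      (hν.trans hu).ne'
  refine ⟨(hint_t.sub hint_one).congr_fun hdecomp measurableSet_Ioi, ?_⟩
  rw [← setIntegral_congr_fun measurableSet_Ioi hdecomp, integral_sub hint_t hint_one,
    integral_const_mul, integral_Ioi_logShiftRemainder hν₀ ht,
    integral_Ioi_logShiftRemainder hν₀ hν, logShiftPrimitive, logShiftPrimitive]
  ring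
end

section
/- Let ν > 0 and let t be a real number with ν + t > 0. Then the improper integral ∫_ν^∞ (log u - log(u + t) + t · log((u + 1)/u)) du converges and equals -ν log ν + (ν log ν - (ν + 1) log(ν + 1)) · t + (ν + t) log(ν + t). -/
open MeasureTheory

/-!
Since `log ((u + 1) / u) = log (u + 1) - log u`, the integrand is a combination `∑ cᵢ log (u + aᵢ)`
with nodes `0, t, 1` and weights `1 - t, -1, t`, which satisfy `∑ cᵢ = 0` and `∑ cᵢ aᵢ = 0`. For any
such combination the two leading terms of `log (u + a) = log u + a / u + O(u⁻²)` cancel, so it is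
integrable at infinity, and `∑ cᵢ (u + aᵢ) log (u + aᵢ)` is a primitive, which tends to
`∑ cᵢ aᵢ = 0`.
-/

section LogCombination

open Real Set Filter Topology Asymptotics

lemma locallyIntegrable_of_forall_intervalIntegrable {E : Type*} [NormedAddCommGroup E]
    {f : ℝ → E} {μ : Measure ℝ} (hf : ∀ a b, IntervalIntegrable f μ a b) :
    LocallyIntegrable f μ := fun x =>
  ⟨Ioc (x - 1) (x + 1), Ioc_mem_nhds (sub_one_lt x) (lt_add_one x), (hf _ _).1⟩

lemma intervalIntegrable_log_add (a x y : ℝ) :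
    IntervalIntegrable (fun u => log (u + a)) volume x y :=
  (IntervalIntegrable.comp_add_right_iff).mpr intervalIntegral.intervalIntegrable_log'

lemma log_one_add_sub_self_isBigO :
    (fun x : ℝ => log (1 + x) - x) =O[𝓝 0] fun x => x ^ 2 := by
  refine IsBigO.of_bound 2 ?_
  filter_upwards [Metric.ball_mem_nhds (0 : ℝ) one_half_pos] with x hx
  replace hx : |x| < 1 / 2 := by simpa using hx
  have taylor := abs_log_sub_add_sum_range_le (x := -x) (by rw [abs_neg]; linarith) 1
  simp only [Finset.sum_range_one, Nat.cast_zero, zero_add, pow_one, div_one, sub_neg_eq_add,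
    abs_neg, one_add_one_eq_two, neg_add_eq_sub] at taylor
  calc ‖log (1 + x) - x‖ ≤ |x| ^ 2 / (1 - |x|) := taylor
    _ ≤ 2 * |x| ^ 2 := by
      rw [div_le_iff₀ (by linarith)]
      nlinarith [sq_nonneg |x|]
    _ = 2 * ‖x ^ 2‖ := by rw [norm_pow, norm_eq_abs]

lemma log_add_sub_log_eventuallyEq_atTop (a : ℝ) :
    (fun u => log (u + a) - log u) =ᶠ[atTop] fun u => log (1 + a / u) := by
  filter_upwards [eventually_gt_atTop 0, eventually_gt_atTop (-a)] with u hu hua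
  rw [← log_div (by linarith) hu.ne', add_div, div_self hu.ne']

lemma log_add_sub_log_sub_div_isBigO_atTop (a : ℝ) :
    (fun u => log (u + a) - log u - a / u) =O[atTop] fun u => u ^ (-2 : ℝ) := by
  have remainder : (fun u => log (1 + a / u) - a / u) =O[atTop] fun u => (a / u) ^ 2 :=
    log_one_add_sub_self_isBigO.comp_tendsto (tendsto_const_nhds.div_atTop tendsto_id)
  have square : (fun u : ℝ => (a / u) ^ 2) =O[atTop] fun u => u ^ (-2 : ℝ) := by
    refine IsBigO.of_bound (a ^ 2) ?_
    filter_upwards [eventually_gt_atTop 0] with u hu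
    rw [rpow_neg hu.le, rpow_two, div_pow, div_eq_mul_inv, norm_mul, norm_pow, norm_eq_abs, sq_abs]
  refine (remainder.trans square).congr' ?_ EventuallyEq.rfl
  exact ((log_add_sub_log_eventuallyEq_atTop a).sub EventuallyEq.rfl).symm

lemma tendsto_add_mul_log_add_sub_log_atTop (a : ℝ) :
    Tendsto (fun u => (u + a) * (log (u + a) - log u)) atTop (𝓝 a) := by
  have log_tendsto : Tendsto (fun u => log (1 + a / u)) atTop (𝓝 0) := by
    have arg_tendsto : Tendsto (fun u : ℝ => 1 + a / u) atTop (𝓝 1) := by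
      simpa using (tendsto_const_nhds.div_atTop tendsto_id).const_add (1 : ℝ)
    simpa using arg_tendsto.log one_ne_zero
  have mul_log_tendsto :
      Tendsto (fun u => u * log (1 + a / u) + a * log (1 + a / u)) atTop (𝓝 a) := by
    simpa using (tendsto_mul_log_one_add_div_atTop a).add (log_tendsto.const_mul a)
  refine mul_log_tendsto.congr' ?_
  filter_upwards [log_add_sub_log_eventuallyEq_atTop a] with u hu
  rw [hu, add_mul]

variable {ι : Type*} {s : Finset ι} {c a : ι → ℝ}

lemma sum_mul_log_add_isBigO_atTop (hc : ∑ i ∈ s, c i = 0) (hca : ∑ i ∈ s, c i * a i = 0) :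
    (fun u => ∑ i ∈ s, c i * log (u + a i)) =O[atTop] fun u => u ^ (-2 : ℝ) := by
  have remainders : (fun u => ∑ i ∈ s, c i * (log (u + a i) - log u - a i / u)) =O[atTop]
      fun u => u ^ (-2 : ℝ) :=
    IsBigO.fun_sum fun i _ => (log_add_sub_log_sub_div_isBigO_atTop (a i)).const_mul_left (c i)
  refine remainders.congr_left fun u => ?_
  simp only [mul_sub, mul_div_assoc', Finset.sum_sub_distrib, ← Finset.sum_mul, ← Finset.sum_div,
    hc, hca, zero_mul, zero_div, sub_zero]

lemma tendsto_sum_mul_add_mul_log_add_atTop (hc : ∑ i ∈ s, c i = 0)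
    (hca : ∑ i ∈ s, c i * a i = 0) :
    Tendsto (fun u => ∑ i ∈ s, c i * ((u + a i) * log (u + a i))) atTop (𝓝 0) := by
  have differences : Tendsto (fun u => ∑ i ∈ s, c i * ((u + a i) * (log (u + a i) - log u)))
      atTop (𝓝 0) := by
    rw [← hca]
    exact tendsto_finsetSum s fun i _ =>
      (tendsto_add_mul_log_add_sub_log_atTop (a i)).const_mul (c i)
  refine differences.congr fun u => ?_
  have weights : ∑ i ∈ s, c i * (u + a i) = 0 := by
    simp only [mul_add, Finset.sum_add_distrib, ← Finset.sum_mul, hc, hca, zero_mul, add_zero]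
  simp only [mul_sub, Finset.sum_sub_distrib, ← mul_assoc, ← Finset.sum_mul, weights, zero_mul,
    sub_zero]

lemma intervalIntegral_sum_mul_log_add (hc : ∑ i ∈ s, c i = 0) (x y : ℝ) :
    ∫ u in x..y, ∑ i ∈ s, c i * log (u + a i) =
      ∑ i ∈ s, c i * ((y + a i) * log (y + a i)) -
        ∑ i ∈ s, c i * ((x + a i) * log (x + a i)) := by
  have summand (i : ι) : ∫ u in x..y, c i * log (u + a i) =
      c i * ((y + a i) * log (y + a i)) - c i * ((x + a i) * log (x + a i)) - c i * (y - x) := by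
    rw [intervalIntegral.integral_const_mul, intervalIntegral.integral_comp_add_right log,
      integral_log]
    ring
  rw [intervalIntegral.integral_finsetSum fun i _ =>
    (intervalIntegrable_log_add ..).const_mul _]
  simp only [summand, Finset.sum_sub_distrib, ← Finset.sum_mul, hc, zero_mul, sub_zero]

lemma integrableOn_Ioi_sum_mul_log_add (hc : ∑ i ∈ s, c i = 0) (hca : ∑ i ∈ s, c i * a i = 0)
    (x : ℝ) : IntegrableOn (fun u => ∑ i ∈ s, c i * log (u + a i)) (Ioi x) := by
  have locally_integrable : LocallyIntegrable fun u => ∑ i ∈ s, c i * log (u + a i) :=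
    locallyIntegrable_of_forall_intervalIntegrable fun y z => by
      simpa only [Finset.sum_fn] using
        IntervalIntegrable.sum s fun i _ =>
          (intervalIntegrable_log_add (a i) y z).const_mul (c i)
  have tail : IntegrableAtFilter (fun u : ℝ => u ^ (-2 : ℝ)) atTop :=
    integrableAtFilter_rpow_atTop_iff.mpr (by norm_num)
  exact ((locally_integrable.locallyIntegrableOn (Ici x)).integrableOn_of_isBigO_atTop
    (sum_mul_log_add_isBigO_atTop hc hca) tail).mono_set Ioi_subset_Ici_self

lemma integral_Ioi_sum_mul_log_add (hc : ∑ i ∈ s, c i = 0) (hca : ∑ i ∈ s, c i * a i = 0)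
    (x : ℝ) :
    ∫ u in Ioi x, ∑ i ∈ s, c i * log (u + a i) =
      -∑ i ∈ s, c i * ((x + a i) * log (x + a i)) := by
  refine tendsto_nhds_unique (intervalIntegral_tendsto_integral_Ioi x
    (integrableOn_Ioi_sum_mul_log_add hc hca x) tendsto_id) ?_
  simpa only [intervalIntegral_sum_mul_log_add hc, id, zero_sub] using
    (tendsto_sum_mul_add_mul_log_add_atTop hc hca).sub_const _

end LogCombination

/- `Real.log x` is `log |x|` for `x < 0`, and the singularities of `log |u + a|` are integrable, so
the interval of integration may contain the points `0`, `-1` and `-t`. -/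
theorem stmt_16_general (ν t : ℝ) :
    IntegrableOn
      (fun u : ℝ => Real.log u - Real.log (u + t) + t * Real.log ((u + 1) / u))
      (Set.Ioi ν) ∧
    ∫ u in Set.Ioi ν, (Real.log u - Real.log (u + t) + t * Real.log ((u + 1) / u)) =
      -ν * Real.log ν + (ν * Real.log ν - (ν + 1) * Real.log (ν + 1)) * t +
        (ν + t) * Real.log (ν + t) := by
  let c : Fin 3 → ℝ := ![1 - t, -1, t]
  let a : Fin 3 → ℝ := ![0, t, 1]
  have sum_c : ∑ i, c i = 0 := by
    simp only [Fin.sum_univ_three, c, Matrix.cons_val]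
    ring
  have sum_c_mul_a : ∑ i, c i * a i = 0 := by
    simp only [Fin.sum_univ_three, c, a, Matrix.cons_val]
    ring
  have integrand_eq : (fun u : ℝ => ∑ i, c i * Real.log (u + a i)) =ᵐ[volume.restrict (Set.Ioi ν)]
      fun u => Real.log u - Real.log (u + t) + t * Real.log ((u + 1) / u) := by
    filter_upwards [Measure.ae_ne _ 0, Measure.ae_ne _ (-1)] with u hu hu'
    rw [Real.log_div (fun h => hu' (eq_neg_of_add_eq_zero_left h)) hu]
    simp only [Fin.sum_univ_three, c, a, Matrix.cons_val, add_zero]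
    ring
  refine ⟨(integrableOn_Ioi_sum_mul_log_add sum_c sum_c_mul_a ν).congr integrand_eq, ?_⟩
  rw [← integral_congr_ae integrand_eq, integral_Ioi_sum_mul_log_add sum_c sum_c_mul_a]
  simp only [Fin.sum_univ_three, c, a, Matrix.cons_val, add_zero]
  ring

theorem stmt_16 (ν t : ℝ) (hν : 0 < ν) (ht : 0 < ν + t) :
    IntegrableOn
      (fun u : ℝ => Real.log u - Real.log (u + t) + t * Real.log ((u + 1) / u))
      (Set.Ioi ν) ∧
    ∫ u in Set.Ioi ν, (Real.log u - Real.log (u + t) + t * Real.log ((u + 1) / u)) =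
      -ν * Real.log ν + (ν * Real.log ν - (ν + 1) * Real.log (ν + 1)) * t +
        (ν + t) * Real.log (ν + t) :=
  stmt_16_general ν t
end

section
/- Fix a real number t. Then ν² · ∫_0^∞ (e^{t y} - 1 - (e^{y} - 1) t) · e^{-ν y} y^{-1} dy tends to (t² - t)/2 as ν → +∞ (along real ν). -/
open MeasureTheory

/-!
Under `u = ν * y` the Laplace integral of `y ^ (a - 1) • h y`, multiplied by `ν ^ a`, becomes the
integral of `h (u / ν)` against the Gamma weight `exp (-u) * u ^ (a - 1)`. As `ν → ∞`, `h (u / ν)`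
tends to `h (0+)`, and exponential growth of `h` costs at most half of the decay of the weight, so
dominated convergence gives the limit `Γ(a) • h (0+)`. The theorem is the case `a = 2` with
`h y = (exp (t * y) - 1 - (exp y - 1) * t) / y ^ 2`, whose value at `0+` is a second-order Taylor
coefficient.
-/

open Filter Real Set Topology

section Laplace

variable {E : Type*} [NormedAddCommGroup E] [NormedSpace ℝ E]

lemma rpow_smul_integral_exp_neg_mul_rpow_smul (h : ℝ → E) (a : ℝ) {ν : ℝ} (hν : 0 < ν) :
    ν ^ a • ∫ y in Ioi (0 : ℝ), (exp (-ν * y) * y ^ (a - 1)) • h y =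
      ∫ u in Ioi (0 : ℝ), (exp (-u) * u ^ (a - 1)) • h (ν⁻¹ * u) := by
  have hscale := integral_comp_mul_left_Ioi'
    (fun u ↦ (exp (-u) * u ^ (a - 1)) • h (ν⁻¹ * u)) 0 hν
  rw [mul_zero] at hscale
  rw [← hscale, ← integral_smul, ← integral_smul]
  refine setIntegral_congr_fun measurableSet_Ioi fun y (hy : 0 < y) ↦ ?_
  have hweight : ν ^ a * (exp (-ν * y) * y ^ (a - 1)) =
      ν * (exp (-(ν * y)) * (ν * y) ^ (a - 1)) := by
    rw [mul_rpow hν.le hy.le, rpow_sub_one hν.ne', neg_mul]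
    field_simp
  simp only [smul_smul, hweight, inv_mul_cancel_left₀ hν.ne']

lemma aestronglyMeasurable_comp_mul_left_Ioi {β : Type*} [TopologicalSpace β] {h : ℝ → β}
    (hh : AEStronglyMeasurable h (volume.restrict (Ioi 0))) {r : ℝ} (hr : 0 < r) :
    AEStronglyMeasurable (fun u ↦ h (r * u)) (volume.restrict (Ioi 0)) :=
  hh.comp_quasiMeasurePreserving <|
    (Measure.quasiMeasurePreserving_smul volume hr.ne').restrict fun _ hu ↦ mul_pos hr hu

lemma integrableOn_exp_neg_half_mul_rpow {a : ℝ} (ha : 0 < a) :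
    IntegrableOn (fun u : ℝ ↦ exp (-u / 2) * u ^ (a - 1)) (Ioi 0) := by
  have hint := integrableOn_rpow_mul_exp_neg_mul_rpow (s := a - 1) (by linarith) one_pos
    (one_half_pos (α := ℝ))
  refine hint.congr_fun (fun u _ ↦ ?_) measurableSet_Ioi
  simp only [rpow_one]
  ring_nf

lemma norm_exp_neg_mul_rpow_smul_comp_inv_mul_le {h : ℝ → E} {M c : ℝ}
    (hbound : ∀ y, 0 < y → ‖h y‖ ≤ M * exp (c * y)) (a : ℝ) {ν u : ℝ} (hν : 0 < ν)
    (hcν : 2 * c ≤ ν) (hu : 0 < u) :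
    ‖(exp (-u) * u ^ (a - 1)) • h (ν⁻¹ * u)‖ ≤ M * (exp (-u / 2) * u ^ (a - 1)) := by
  have hM : 0 ≤ M :=
    nonneg_of_mul_nonneg_left ((norm_nonneg _).trans (hbound u hu)) (exp_pos _)
  have hexponent : c * (ν⁻¹ * u) ≤ u / 2 := by
    rw [← mul_assoc, ← div_eq_mul_inv, div_eq_mul_inv u 2, mul_comm u]
    gcongr
    rw [div_le_iff₀ hν]
    linarith
  rw [norm_smul, Real.norm_of_nonneg (by positivity)]
  calc exp (-u) * u ^ (a - 1) * ‖h (ν⁻¹ * u)‖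
      ≤ exp (-u) * u ^ (a - 1) * (M * exp (u / 2)) := by
        gcongr
        exact (hbound _ (by positivity)).trans (by gcongr)
    _ = M * (exp (-u + u / 2) * u ^ (a - 1)) := by rw [exp_add]; ring
    _ = M * (exp (-u / 2) * u ^ (a - 1)) := by ring_nf

/-- The leading term of Watson's lemma. -/
theorem tendsto_rpow_smul_integral_exp_neg_mul_rpow_smul [CompleteSpace E] {h : ℝ → E} {L : E}
    {a M c : ℝ} (ha : 0 < a) (hmeas : AEStronglyMeasurable h (volume.restrict (Ioi 0)))
    (hbound : ∀ y, 0 < y → ‖h y‖ ≤ M * exp (c * y)) (hlim : Tendsto h (𝓝[>] 0) (𝓝 L)) :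
    Tendsto (fun ν : ℝ ↦ ν ^ a • ∫ y in Ioi (0 : ℝ), (exp (-ν * y) * y ^ (a - 1)) • h y)
      atTop (𝓝 (Gamma a • L)) := by
  suffices Tendsto (fun ν : ℝ ↦ ∫ u in Ioi (0 : ℝ), (exp (-u) * u ^ (a - 1)) • h (ν⁻¹ * u))
      atTop (𝓝 (Gamma a • L)) by
    refine this.congr' ?_
    filter_upwards [eventually_gt_atTop 0] with ν hν
    exact (rpow_smul_integral_exp_neg_mul_rpow_smul h a hν).symm
  rw [Gamma_eq_integral ha, ← integral_smul_const]
  refine tendsto_integral_filter_of_dominated_convergence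
    (fun u ↦ M * (exp (-u / 2) * u ^ (a - 1))) ?_ ?_
    ((integrableOn_exp_neg_half_mul_rpow ha).const_mul M) ?_
  · filter_upwards [eventually_gt_atTop 0] with ν hν
    have hweight : Measurable fun u : ℝ ↦ exp (-u) * u ^ (a - 1) := by fun_prop
    exact hweight.aestronglyMeasurable.smul
      (aestronglyMeasurable_comp_mul_left_Ioi hmeas (inv_pos.2 hν))
  · filter_upwards [eventually_gt_atTop 0, eventually_ge_atTop (2 * c)] with ν hν hcν
    exact ae_restrict_of_forall_mem measurableSet_Ioi fun u hu ↦
      norm_exp_neg_mul_rpow_smul_comp_inv_mul_le hbound a hν hcν hu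
  · refine ae_restrict_of_forall_mem measurableSet_Ioi fun u (hu : 0 < u) ↦ ?_
    have hzero : Tendsto (fun ν : ℝ ↦ ν⁻¹ * u) atTop (𝓝[>] 0) := by
      refine tendsto_nhdsWithin_iff.2 ⟨?_, ?_⟩
      · simpa only [zero_mul] using tendsto_inv_atTop_zero.mul_const u
      · filter_upwards [eventually_gt_atTop 0] with ν hν using mul_pos (inv_pos.2 hν) hu
    exact (hlim.comp hzero).const_smul _

end Laplace

lemma abs_exp_sub_sum_range_le_abs_pow_mul_exp_abs (x : ℝ) (n : ℕ) :
    |exp x - ∑ m ∈ Finset.range n, x ^ m / m.factorial| ≤ |x| ^ n * exp |x| := by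
  simpa only [← Complex.ofReal_exp, ← Complex.ofReal_pow, ← Complex.ofReal_natCast,
    ← Complex.ofReal_div, ← Complex.ofReal_sum, ← Complex.ofReal_sub, Complex.norm_real,
    Real.norm_eq_abs] using Complex.norm_exp_sub_sum_le_norm_mul_exp x n

lemma abs_exp_sub_one_sub_id_le_sq_mul_exp_abs (x : ℝ) :
    |exp x - 1 - x| ≤ x ^ 2 * exp |x| := by
  simpa [Finset.sum_range_succ, sub_sub] using abs_exp_sub_sum_range_le_abs_pow_mul_exp_abs x 2

lemma tendsto_exp_mul_sub_one_sub_div_sq (t : ℝ) :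
    Tendsto (fun y ↦ (exp (t * y) - 1 - t * y) / y ^ 2) (𝓝[≠] 0) (𝓝 (t ^ 2 / 2)) := by
  have hsum (x : ℝ) : ∑ m ∈ Finset.range 3, x ^ m / m.factorial = 1 + x + x ^ 2 / 2 := by
    simp [Finset.sum_range_succ]
  have hmul : Tendsto (fun y ↦ t * y) (𝓝 0) (𝓝 0) := by
    simpa only [mul_zero] using (continuous_const_mul t).tendsto 0
  have hsq : (fun y : ℝ ↦ (t * y) ^ 2) =O[𝓝 0] fun y ↦ y ^ 2 := by
    simpa only [mul_pow] using (Asymptotics.isBigO_refl _ _).const_mul_left (t ^ 2)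
  have htaylor := ((exp_sub_sum_range_succ_isLittleO_pow 2).comp_tendsto hmul).trans_isBigO hsq
  have hquot :=
    (htaylor.tendsto_div_nhds_zero.mono_left (nhdsWithin_le_nhds (s := {0}ᶜ))).add_const (t ^ 2 / 2)
  rw [zero_add] at hquot
  refine hquot.congr' ?_
  filter_upwards [self_mem_nhdsWithin] with y (hy : y ≠ 0)
  simp only [Function.comp_apply, hsum]
  field_simp
  ring

/-- The symbol of the jump operator `f ↦ f (x + y) - f x - (exp y - 1) * f' x`, which annihilates
`x ↦ exp x`: the real number `t` stands for `∂/∂x`. -/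
noncomputable def compensatedJump (t y : ℝ) : ℝ :=
  exp (t * y) - 1 - (exp y - 1) * t

lemma compensatedJump_eq_sub (t y : ℝ) :
    compensatedJump t y = (exp (t * y) - 1 - t * y) - t * (exp y - 1 - y) := by
  rw [compensatedJump]
  ring

lemma measurable_compensatedJump (t : ℝ) : Measurable (compensatedJump t) := by
  unfold compensatedJump
  fun_prop

lemma tendsto_compensatedJump_div_sq (t : ℝ) :
    Tendsto (fun y ↦ compensatedJump t y / y ^ 2) (𝓝[≠] 0) (𝓝 ((t ^ 2 - t) / 2)) := by
  have hsub := (tendsto_exp_mul_sub_one_sub_div_sq t).sub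
    ((tendsto_exp_mul_sub_one_sub_div_sq 1).const_mul t)
  convert hsub using 2 with y
  · rw [compensatedJump_eq_sub, one_mul]
    ring
  · ring

lemma abs_compensatedJump_le (t y : ℝ) :
    |compensatedJump t y| ≤ (t ^ 2 + |t|) * exp ((|t| + 1) * |y|) * y ^ 2 := by
  have hexp_mul : exp |t * y| ≤ exp ((|t| + 1) * |y|) := by
    rw [abs_mul]
    gcongr
    linarith
  have hexp : exp |y| ≤ exp ((|t| + 1) * |y|) :=
    exp_le_exp.2 (le_mul_of_one_le_left (abs_nonneg y) (by linarith [abs_nonneg t]))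
  calc |compensatedJump t y|
      ≤ |exp (t * y) - 1 - t * y| + |t| * |exp y - 1 - y| := by
        rw [compensatedJump_eq_sub, ← abs_mul]
        exact abs_sub _ _
    _ ≤ (t * y) ^ 2 * exp |t * y| + |t| * (y ^ 2 * exp |y|) := by
        gcongr <;> exact abs_exp_sub_one_sub_id_le_sq_mul_exp_abs _
    _ ≤ (t * y) ^ 2 * exp ((|t| + 1) * |y|) + |t| * (y ^ 2 * exp ((|t| + 1) * |y|)) := by
        gcongr
    _ = (t ^ 2 + |t|) * exp ((|t| + 1) * |y|) * y ^ 2 := by ring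

theorem stmt_19 (t : ℝ) :
    Filter.Tendsto
      (fun ν : ℝ => ν ^ 2 *
        ∫ y in Set.Ioi (0 : ℝ),
          (Real.exp (t * y) - 1 - (Real.exp y - 1) * t) * Real.exp (-ν * y) * y⁻¹)
      Filter.atTop (nhds ((t ^ 2 - t) / 2)) := by
  have hmeas : Measurable fun y ↦ compensatedJump t y / y ^ 2 :=
    (measurable_compensatedJump t).div (by fun_prop)
  have hbound : ∀ y, 0 < y →
      ‖compensatedJump t y / y ^ 2‖ ≤ (t ^ 2 + |t|) * exp ((|t| + 1) * y) := fun y hy ↦ by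
    rw [norm_div, Real.norm_of_nonneg (sq_nonneg y), div_le_iff₀ (by positivity)]
    simpa only [Real.norm_eq_abs, abs_of_pos hy] using abs_compensatedJump_le t y
  have hlim := (tendsto_compensatedJump_div_sq t).mono_left (nhdsGT_le_nhdsNE 0)
  have hwatson :=
    tendsto_rpow_smul_integral_exp_neg_mul_rpow_smul two_pos hmeas.aestronglyMeasurable hbound hlim
  rw [Gamma_two, one_smul] at hwatson
  refine hwatson.congr fun ν ↦ ?_
  rw [rpow_two, smul_eq_mul]
  congr 1
  refine setIntegral_congr_fun measurableSet_Ioi fun y (hy : 0 < y) ↦ ?_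
  have hexponent : (2 : ℝ) - 1 = 1 := by norm_num
  simp only [compensatedJump, smul_eq_mul, hexponent, rpow_one]
  field_simp
end
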